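/- arXiv:1212.3799 — 3 statements merged into one kernel-verified Lean document; each statement's English description precedes it below -/
import Mathlib

section
/- Let N ≥ 1, 1 ≤ n ≤ N, and 0 < ε < 1. Then Pr[S > (1+ε)·n/N] < exp(−(n/2)·(ε²/2 − ε³/3)), where S = Σ_{j=1}^n Q_j². -/
open MeasureTheory Finset

noncomputable section

/-- The real sign value of a Boolean. -/
def rad (b : Bool) : ℝ := if b then 1 else -1

/-- The symmetric random sign matrix: entries `r i j = r j i`, determined by the
independent Booleans `ω i j` for `i ≤ j`. -/
def rsym {N : ℕ} (ω : Fin N → Fin N → Bool) (i j : Fin N) : ℝ :=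
  if i ≤ j then rad (ω i j) else rad (ω j i)

/-- The uniform probability measure on Boolean square arrays, making the upper-triangular
entries of `rsym` independent Rademacher random variables. -/
def μsym (N : ℕ) : Measure (Fin N → Fin N → Bool) :=
  (PMF.uniformOfFintype (Fin N → Fin N → Bool)).toMeasure

/-- `Q j = N^{-1/2} ∑_k r_{jk} α_k`. -/
def Q {N n : ℕ} (hn : n ≤ N) (α : Fin N → ℝ) (j : Fin n)
    (ω : Fin N → Fin N → Bool) : ℝ :=
  (Real.sqrt N)⁻¹ * ∑ k, rsym ω (Fin.castLE hn j) k * α k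

/-- `S = ∑_{j=1}^n Q_j^2`. -/
def S {N n : ℕ} (hn : n ≤ N) (α : Fin N → ℝ) (ω : Fin N → Fin N → Bool) : ℝ :=
  ∑ j : Fin n, (Q hn α j ω) ^ 2

open ProbabilityTheory in
lemma gauss1 (a b : ℝ) (ha : a < 1/2) :
    ∫⁻ x, ENNReal.ofReal (Real.exp (a * x^2 + b * x)) ∂(gaussianReal 0 1)
      = ENNReal.ofReal ((Real.sqrt (1 - 2*a))⁻¹ * Real.exp (b^2 / (2*(1-2*a)))) := by
  have hd : 0 < 1 - 2*a := by linarith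
  rw [gaussianReal_of_var_ne_zero _ one_ne_zero,
    lintegral_withDensity_eq_lintegral_mul _ (measurable_gaussianPDF 0 1) (by fun_prop)]
  set v : NNReal := ⟨(1-2*a)⁻¹, by positivity⟩ with hv
  have hv0 : v ≠ 0 := by
    intro h
    have h' : (v:ℝ) = 0 := by rw [h]; rfl
    have h'' : (v:ℝ) = (1-2*a)⁻¹ := rfl
    have : 0 < (1-2*a)⁻¹ := by positivity
    linarith
  have hvr : (v:ℝ) = (1-2*a)⁻¹ := rfl
  have key : ∀ x, (gaussianPDF 0 1 * fun x => ENNReal.ofReal (Real.exp (a * x^2 + b * x))) x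
      = ENNReal.ofReal ((Real.sqrt (1 - 2*a))⁻¹ * Real.exp (b^2 / (2*(1-2*a))))
        * gaussianPDF (b/(1-2*a)) v x := by
    intro x
    simp only [Pi.mul_apply, gaussianPDF, gaussianPDFReal, hvr]
    rw [← ENNReal.ofReal_mul (by positivity), ← ENNReal.ofReal_mul (by positivity)]
    congr 1
    have h1 : Real.sqrt (2 * Real.pi * (1-2*a)⁻¹) = Real.sqrt (2*Real.pi) * (Real.sqrt (1-2*a))⁻¹ := by
      rw [Real.sqrt_mul (by positivity), Real.sqrt_inv]
    rw [h1]
    have hs : Real.sqrt (1-2*a) ≠ 0 := by positivity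
    have hp : Real.sqrt (2*Real.pi) ≠ 0 := by positivity
    have h2 : ∀ A B C D : ℝ, A + B = C + D → Real.exp A * Real.exp B = Real.exp C * Real.exp D := by
      intro A B C D h; rw [← Real.exp_add, ← Real.exp_add, h]
    have h3 := h2 (-(x-0)^2/(2*1)) (a*x^2+b*x) (b^2 / (2*(1-2*a)))
      (-(x - b/(1-2*a))^2/(2*(1-2*a)⁻¹)) (by field_simp; ring)
    simp only [NNReal.coe_one, mul_one] at h3 ⊢
    rw [mul_assoc, h3]
    field_simp
  simp_rw [key]
  rw [lintegral_const_mul _ (measurable_gaussianPDF _ _), lintegral_gaussianPDF_eq_one _ hv0, mul_one]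

lemma lint_prod {N : ℕ} (ν : Measure ℝ) [IsProbabilityMeasure ν] (f : Fin N → ℝ → ENNReal)
    (hf : ∀ i, Measurable (f i)) :
    ∫⁻ g, ∏ i, f i (g i) ∂(Measure.pi (fun _ : Fin N => ν)) = ∏ i, ∫⁻ x, f i x ∂ν := by
  have h := ProbabilityTheory.lintegral_prod_eq_prod_lintegral_of_indepFun
    (μ := Measure.pi (fun _ : Fin N => ν)) Finset.univ (fun i g => f i (g i))
    (ProbabilityTheory.iIndepFun_pi (fun i => (hf i).aemeasurable)) (fun i => by
      have := hf i
      fun_prop)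
  rw [h]
  refine Finset.prod_congr rfl fun i _ => ?_
  exact (measurePreserving_eval (fun _ : Fin N => ν) i).lintegral_comp (hf i)

lemma avg_rad {N : ℕ} (C : Fin N → Fin N → ℝ) :
    ∑ ω : Fin N → Fin N → Bool, Real.exp (∑ i, ∑ k, rad (ω i k) * C i k)
      = (Fintype.card (Fin N → Fin N → Bool) : ℝ) * ∏ i, ∏ k, Real.cosh (C i k) := by
  have h1 : ∀ i k, ∑ b : Bool, Real.exp (rad b * C i k) = 2 * Real.cosh (C i k) := by
    intro i k
    simp [rad, Real.cosh_eq]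
    ring
  have h2 : ∀ i, ∑ p : Fin N → Bool, ∏ k, Real.exp (rad (p k) * C i k) = 2^N * ∏ k, Real.cosh (C i k) := by
    intro i
    rw [← Fintype.prod_sum (fun k b => Real.exp (rad b * C i k))]
    simp_rw [h1, Finset.prod_mul_distrib]
    simp
  simp_rw [Real.exp_sum]
  rw [← Fintype.prod_sum (fun i (p : Fin N → Bool) => ∏ k, Real.exp (rad (p k) * C i k))]
  simp_rw [h2, Finset.prod_mul_distrib]
  simp

lemma avg_rad_le {N : ℕ} (C : Fin N → Fin N → ℝ) :
    ∑ ω : Fin N → Fin N → Bool, Real.exp (∑ i, ∑ k, rad (ω i k) * C i k)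
      ≤ (Fintype.card (Fin N → Fin N → Bool) : ℝ) * Real.exp (∑ i, ∑ k, (C i k)^2/2) := by
  rw [avg_rad]
  simp_rw [Real.exp_sum]
  gcongr with i _ k _
  exact Real.cosh_le_exp_half_sq _

def Cf {N : ℕ} (G α : Fin N → ℝ) (i k : Fin N) : ℝ :=
  if i < k then G i * α k + G k * α i else if i = k then G i * α i else 0

lemma sum_swap_lt {N : ℕ} (F : Fin N → Fin N → ℝ) :
    ∑ i, ∑ k, F i k = ∑ i, ∑ k, (if i < k then F i k + F k i else if i = k then F i i else 0) := by
  have h1 : ∀ i k : Fin N, F i k = (if i < k then F i k else 0) + (if k < i then F i k else 0)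
      + (if i = k then F i i else 0) := by
    intro i k
    rcases lt_trichotomy i k with h | h | h
    · simp [h, h.not_gt, h.ne]
    · simp [h]
    · simp [h, h.not_gt, h.ne']
  have h2 : ∑ i, ∑ k, (if k < i then F i k else 0) = ∑ i, ∑ k, (if i < k then F k i else 0) :=
    Finset.sum_comm
  calc ∑ i, ∑ k, F i k = ∑ i, ∑ k, ((if i < k then F i k else 0) + (if k < i then F i k else 0)
      + (if i = k then F i i else 0)) := by
        refine Finset.sum_congr rfl fun i _ => Finset.sum_congr rfl fun k _ => h1 i k
    _ = _ := by
      simp_rw [Finset.sum_add_distrib]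
      rw [h2]
      simp_rw [← Finset.sum_add_distrib]
      refine Finset.sum_congr rfl fun i _ => Finset.sum_congr rfl fun k _ => ?_
      rcases lt_trichotomy i k with h | h | h
      · simp [h, h.ne]
      · simp [h]
      · simp [h.not_gt, h.ne']

lemma bilin_eq {N : ℕ} (G α : Fin N → ℝ) (ω : Fin N → Fin N → Bool) :
    ∑ i, G i * ∑ k, rsym ω i k * α k = ∑ i, ∑ k, rad (ω i k) * Cf G α i k := by
  simp_rw [Finset.mul_sum]
  rw [sum_swap_lt]
  refine Finset.sum_congr rfl fun i _ => Finset.sum_congr rfl fun k _ => ?_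
  rcases lt_trichotomy i k with h | h | h
  · simp [rsym, Cf, h, h.le, h.not_ge]; ring
  · simp [rsym, Cf, h]; ring
  · simp [Cf, h.not_gt, h.ne']

lemma Cf_sq {N : ℕ} (G α : Fin N → ℝ) (hα : ∑ k, (α k) ^ 2 = 1) :
    ∑ i, ∑ k, (Cf G α i k)^2 = ∑ i, G i ^2 * (1 - α i^2) + (∑ i, G i * α i)^2 := by
  have h1 : ∑ i, G i ^2 * (1 - α i^2) + (∑ i, G i * α i)^2
     = ∑ i, ∑ k, (G i ^2 * α k^2 + (G i * α i) * (G k * α k) - (if i = k then G i^2*α i^2 else 0)) := by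
    simp_rw [Finset.sum_sub_distrib, Finset.sum_add_distrib, ← Finset.mul_sum, hα, ← Finset.sum_mul]
    simp [mul_sub, Finset.sum_sub_distrib]
    ring
  rw [h1, sum_swap_lt (fun i k => G i ^2 * α k^2 + (G i * α i) * (G k * α k) - (if i = k then G i^2*α i^2 else 0))]
  refine Finset.sum_congr rfl fun i _ => Finset.sum_congr rfl fun k _ => ?_
  rcases lt_trichotomy i k with h | h | h
  · simp [Cf, h, h.ne, h.ne']; ring
  · simp [Cf, h]; ring
  · simp [Cf, h.not_gt, h.ne']
open ProbabilityTheory in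
lemma mgf_enn {N : ℕ} (α w : Fin N → ℝ) (hα : ∑ k, (α k) ^ 2 = 1) (hw : ∀ i, w i ^ 2 = w i)
    (h : ℝ) (h0 : 0 ≤ h) (hd : ∀ i, 0 < 1 - 2 * (h * (w i * (1 - α i^2))))
    (hA : h * ∑ i, w i * α i^2 / (1 - 2 * (h * (w i * (1 - α i^2)))) < 1/2) :
    ∑ ω : Fin N → Fin N → Bool,
      ENNReal.ofReal (Real.exp (h * ∑ i, w i * (∑ k, rsym ω i k * α k)^2))
    ≤ (Fintype.card (Fin N → Fin N → Bool) : ENNReal) *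
      ENNReal.ofReal ((∏ i, (Real.sqrt (1 - 2 * (h * (w i * (1 - α i^2)))))⁻¹) *
        (Real.sqrt (1 - 2 * (h * ∑ i, w i * α i^2 / (1 - 2 * (h * (w i * (1 - α i^2)))))))⁻¹) := by
  set γ := gaussianReal 0 1 with hγ
  set s := Real.sqrt (2*h) with hs
  have hs2 : s^2 = 2*h := Real.sq_sqrt (by linarith)
  set P := Measure.pi (fun _ : Fin N => γ) with hP
  have e1 : ∀ ω : Fin N → Fin N → Bool,
      ENNReal.ofReal (Real.exp (h * ∑ i, w i * (∑ k, rsym ω i k * α k)^2))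
      = ∫⁻ g, ENNReal.ofReal (Real.exp (∑ i, (s * w i * g i) * ∑ k, rsym ω i k * α k)) ∂P := by
    intro ω
    have := lint_prod γ (fun i x => ENNReal.ofReal (Real.exp (0 * x^2 + (s * w i * ∑ k, rsym ω i k * α k) * x)))
      (fun i => by fun_prop)
    simp_rw [hγ, gauss1 0 _ (by norm_num : (0:ℝ) < 1/2), ← hγ, ← hP] at this
    rw [← ENNReal.ofReal_prod_of_nonneg (fun i _ => by positivity)] at this
    simp_rw [← ENNReal.ofReal_prod_of_nonneg (fun i _ => (Real.exp_pos _).le)] at this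
    simp only [mul_zero, sub_zero, Real.sqrt_one, inv_one, one_mul, zero_mul, zero_add, mul_one,
      ← Real.exp_sum] at this
    rw [Finset.mul_sum]
    have q1 : ∑ i, h * (w i * (∑ k, rsym ω i k * α k)^2)
        = ∑ i, (s * w i * ∑ k, rsym ω i k * α k)^2 / 2 := by
      refine Finset.sum_congr rfl fun i _ => ?_
      rw [mul_pow, mul_pow, hs2, hw]; ring
    rw [q1, ← this]
    refine lintegral_congr fun g => ?_
    congr 2
    refine Finset.sum_congr rfl fun i _ => ?_
    ring
  simp_rw [e1]
  rw [← lintegral_finsetSum _ (fun ω _ => by fun_prop)]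
  have e2 : ∀ g : Fin N → ℝ,
      ∑ ω : Fin N → Fin N → Bool, ENNReal.ofReal (Real.exp (∑ i, (s * w i * g i) * ∑ k, rsym ω i k * α k))
      ≤ (Fintype.card (Fin N → Fin N → Bool) : ENNReal) *
        ∫⁻ x, ∏ i, ENNReal.ofReal (Real.exp ((h * (w i * (1 - α i^2))) * (g i)^2 + (s * w i * α i * x) * g i)) ∂γ := by
    intro g
    have a1 : ∫⁻ x, ∏ i, ENNReal.ofReal (Real.exp ((h * (w i * (1 - α i^2))) * (g i)^2 + (s * w i * α i * x) * g i)) ∂γ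
      = ENNReal.ofReal (Real.exp (∑ i, ∑ k, (Cf (fun i => s * w i * g i) α i k)^2/2)) := by
      simp_rw [← ENNReal.ofReal_prod_of_nonneg (fun i _ => (Real.exp_pos _).le), ← Real.exp_sum,
        Finset.sum_add_distrib]
      have a2 : ∀ x : ℝ, ENNReal.ofReal (Real.exp (∑ i, (h * (w i * (1 - α i^2))) * (g i)^2
          + ∑ i, (s * w i * α i * x) * g i))
          = ENNReal.ofReal (Real.exp (∑ i, (h * (w i * (1 - α i^2))) * (g i)^2)) *
            ENNReal.ofReal (Real.exp (0 * x^2 + (∑ i, (s * w i * g i) * α i) * x)) := by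
        intro x
        rw [← ENNReal.ofReal_mul (Real.exp_pos _).le, ← Real.exp_add]
        congr 3
        rw [zero_mul, zero_add, Finset.sum_mul]
        refine Finset.sum_congr rfl fun i _ => ?_
        ring
      simp_rw [a2]
      rw [lintegral_const_mul _ (by fun_prop), hγ, gauss1 0 _ (by norm_num : (0:ℝ) < 1/2),
        ← ENNReal.ofReal_mul (Real.exp_pos _).le]
      simp only [mul_zero, sub_zero, Real.sqrt_one, inv_one, one_mul, mul_one]
      rw [← Real.exp_add]
      simp_rw [← Finset.sum_div]
      rw [Cf_sq _ _ hα, add_div, Finset.sum_div]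
      congr 3
      refine Finset.sum_congr rfl fun i _ => ?_
      rw [mul_pow, mul_pow, hs2, hw]; ring
    rw [a1, ← ENNReal.ofReal_sum_of_nonneg (fun i _ => (Real.exp_pos _).le)]
    simp_rw [bilin_eq]
    rw [← ENNReal.ofReal_natCast, ← ENNReal.ofReal_mul (by positivity)]
    exact ENNReal.ofReal_le_ofReal (avg_rad_le _)
  refine (lintegral_mono e2).trans ?_
  have hm : Measurable (Function.uncurry fun (g : Fin N → ℝ) (x : ℝ) => ∏ i, ENNReal.ofReal (Real.exp ((h * (w i * (1 - α i^2))) * (g i)^2 + (s * w i * α i * x) * g i))) := by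
    unfold Function.uncurry
    fun_prop
  rw [lintegral_const_mul _ hm.lintegral_prod_right, lintegral_lintegral_swap hm.aemeasurable]
  gcongr
  apply le_of_eq
  have e3 : ∀ x : ℝ, ∫⁻ g, ∏ i, ENNReal.ofReal (Real.exp ((h * (w i * (1 - α i^2))) * (g i)^2 + (s * w i * α i * x) * g i)) ∂P
     = ENNReal.ofReal (∏ i, (Real.sqrt (1 - 2 * (h * (w i * (1 - α i^2)))))⁻¹) *
       ENNReal.ofReal (Real.exp ((h * ∑ i, w i * α i^2 / (1 - 2 * (h * (w i * (1 - α i^2))))) * x^2 + 0 * x)) := by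
    intro x
    rw [hP, lint_prod γ (fun i y => ENNReal.ofReal (Real.exp ((h * (w i * (1 - α i^2))) * y^2 + (s * w i * α i * x) * y)))
      (fun i => by fun_prop)]
    rw [← ENNReal.ofReal_mul (by positivity)]
    have : ∀ i, h * (w i * (1 - α i^2)) < 1/2 := fun i => by have := hd i; linarith
    rw [hγ, Finset.prod_congr rfl (fun i _ => gauss1 _ _ (this i)), ← ENNReal.ofReal_prod_of_nonneg
      (fun i _ => by positivity), Finset.prod_mul_distrib, ← Real.exp_sum]
    congr 3
    rw [zero_mul, add_zero, Finset.mul_sum, Finset.sum_mul]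
    refine Finset.sum_congr rfl fun i _ => ?_
    rw [mul_pow, mul_pow, mul_pow, hs2, hw]
    have := (hd i).ne'
    rw [div_eq_mul_inv, div_eq_mul_inv, mul_inv]
    ring
  simp_rw [e3]
  rw [lintegral_const_mul _ (by fun_prop), hγ, gauss1 _ _ hA, ← ENNReal.ofReal_mul (by positivity)]
  simp
lemma one_add_sum_le_prod' {ι : Type*} (s : Finset ι) (f : ι → ℝ) (hf : ∀ i, 0 ≤ f i) :
    1 + ∑ i ∈ s, f i ≤ ∏ i ∈ s, (1 + f i) := by
  classical
  induction s using Finset.induction_on with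
  | empty => simp
  | insert a s ha ih =>
    rw [Finset.sum_insert ha, Finset.prod_insert ha]
    have h1 : 0 ≤ ∑ i ∈ s, f i := Finset.sum_nonneg fun i _ => hf i
    have h2 := hf a
    nlinarith [mul_nonneg h1 h2, mul_le_mul_of_nonneg_left ih (by linarith : 0 ≤ 1 + f a)]

def wt (N n : ℕ) (i : Fin N) : ℝ := if i.val < n then 1 else 0

lemma card_lt {N n : ℕ} (hn : n ≤ N) : (Finset.univ.filter (fun i : Fin N => i.val < n)).card = n := by
  have : (Finset.univ.filter (fun i : Fin N => i.val < n)) = (Finset.univ : Finset (Fin n)).map (Fin.castLEEmb hn) := by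
    ext i
    simp only [Finset.mem_filter, Finset.mem_univ, true_and, Finset.mem_map]
    constructor
    · intro h; exact ⟨⟨i, h⟩, by ext; simp⟩
    · rintro ⟨j, rfl⟩; simp
  rw [this]; simp

lemma sum_wt {N n : ℕ} (hn : n ≤ N) (F : Fin N → ℝ) :
    ∑ j : Fin n, F (Fin.castLE hn j) = ∑ i, wt N n i * F i := by
  have : (Finset.univ.filter (fun i : Fin N => i.val < n)) = (Finset.univ : Finset (Fin n)).map (Fin.castLEEmb hn) := by
    ext i
    simp only [Finset.mem_filter, Finset.mem_univ, true_and, Finset.mem_map]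
    constructor
    · intro h; exact ⟨⟨i, h⟩, by ext; simp⟩
    · rintro ⟨j, rfl⟩; simp
  simp only [wt, ite_mul, one_mul, zero_mul]
  rw [← Finset.sum_filter, this, Finset.sum_map]
  rfl

lemma mgf_real {N n : ℕ} (hn : n ≤ N) (α : Fin N → ℝ) (hα : ∑ k, (α k) ^ 2 = 1) (c : ℝ) (c0 : 0 < c) (c1 : c < 1) :
    ∑ ω : Fin N → Fin N → Bool,
      Real.exp (c / (2 * (1 + c)) * ∑ i, wt N n i * (∑ k, rsym ω i k * α k)^2)
    ≤ (Fintype.card (Fin N → Fin N → Bool) : ℝ) * (Real.sqrt (((1+c)⁻¹)^n * (1 - c^2)))⁻¹ := by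
  set h := c / (2 * (1 + c)) with hh
  have hα1 : ∀ i, α i ^ 2 ≤ 1 := by
    intro i; rw [← hα]
    exact Finset.single_le_sum (f := fun k => α k^2) (fun k _ => sq_nonneg _) (Finset.mem_univ i)
  have hde : ∀ i, 1 - 2 * (h * (wt N n i * (1 - α i^2)))
      = (if i.val < n then (1+c)⁻¹ else 1) * (1 + c * (wt N n i * α i^2)) := by
    intro i
    unfold wt
    split_ifs
    · rw [hh]; field_simp; ring
    · simp
  have hw0 : ∀ i, 0 ≤ wt N n i := by intro i; unfold wt; split_ifs <;> norm_num
  have hw1 : ∀ i, wt N n i ≤ 1 := by intro i; unfold wt; split_ifs <;> norm_num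
  have hp : ∀ i, 0 ≤ c * (wt N n i * α i^2) := fun i => by have := hw0 i; positivity
  have hd : ∀ i, 0 < 1 - 2 * (h * (wt N n i * (1 - α i^2))) := by
    intro i; rw [hde]
    have := hp i
    apply mul_pos
    · split_ifs <;> positivity
    · linarith
  set b := ∑ i, wt N n i * α i^2 with hb
  have hb0 : 0 ≤ b := Finset.sum_nonneg fun i _ => by have := hw0 i; positivity
  have hb1 : b ≤ 1 := by
    rw [← hα]
    refine Finset.sum_le_sum fun i _ => ?_
    nlinarith [hw1 i, sq_nonneg (α i)]
  have hA : h * ∑ i, wt N n i * α i^2 / (1 - 2 * (h * (wt N n i * (1 - α i^2)))) ≤ c * b / 2 := by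
    rw [hb, Finset.mul_sum, Finset.mul_sum, Finset.sum_div]
    refine Finset.sum_le_sum fun i _ => ?_
    rw [hde]
    unfold wt
    split_ifs
    · rw [hh]
      have : c / (2 * (1 + c)) * (1 * α i ^ 2 / ((1 + c)⁻¹ * (1 + c * (1 * α i ^ 2)))) = c * α i^2 / (2 * (1 + c * α i^2)) := by
        field_simp
      rw [this, div_le_div_iff₀ (by positivity) (by norm_num)]
      have h1 : 0 ≤ c * α i^2 := by positivity
      nlinarith
    · simp
  have hcb : c * b < 1 := by nlinarith
  have hA' : h * ∑ i, wt N n i * α i^2 / (1 - 2 * (h * (wt N n i * (1 - α i^2)))) < 1/2 := by linarith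
  have key := mgf_enn α (wt N n) hα (fun i => by unfold wt; split_ifs <;> norm_num) h (by positivity) hd hA'
  rw [← ENNReal.ofReal_sum_of_nonneg (fun i _ => (Real.exp_pos _).le), ← ENNReal.ofReal_natCast,
    ← ENNReal.ofReal_mul (by positivity), ENNReal.ofReal_le_ofReal_iff (by positivity)] at key
  refine key.trans ?_
  gcongr
  rw [Finset.prod_inv_distrib, ← mul_inv]
  have hs : ∏ i, Real.sqrt (1 - 2 * (h * (wt N n i * (1 - α i^2))))
      = Real.sqrt (∏ i, (1 - 2 * (h * (wt N n i * (1 - α i^2))))) :=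
    (Real.sqrt_prod _ (fun i _ => (hd i).le)).symm
  have hP : (1+c)⁻¹^n * (1 + c * b) ≤ ∏ i, (1 - 2 * (h * (wt N n i * (1 - α i^2)))) := by
    simp_rw [hde]
    rw [Finset.prod_mul_distrib, ← Finset.prod_filter, Finset.prod_const, card_lt hn, hb, Finset.mul_sum]
    gcongr
    exact one_add_sum_le_prod' _ _ hp
  rw [hs, ← Real.sqrt_mul (Finset.prod_nonneg fun i _ => (hd i).le)]
  have hc2 : 0 < 1 - c^2 := by nlinarith
  have hcb2 : (c * b)^2 ≤ c^2 := by
    rw [mul_pow]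
    exact mul_le_of_le_one_right (sq_nonneg c) (pow_le_one₀ hb0 hb1)
  have hfin : (1 + c)⁻¹ ^ n * (1 - c ^ 2) ≤ (∏ i, (1 - 2 * (h * (wt N n i * (1 - α i^2)))))
      * (1 - 2 * (h * ∑ i, wt N n i * α i^2 / (1 - 2 * (h * (wt N n i * (1 - α i^2)))))) := by
    calc (1 + c)⁻¹ ^ n * (1 - c ^ 2) ≤ (1 + c)⁻¹ ^ n * ((1 + c * b) * (1 - c*b)) := by
          gcongr
          nlinarith
      _ = ((1+c)⁻¹^n * (1 + c * b)) * (1 - c*b) := by ring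
      _ ≤ _ := by
        apply mul_le_mul hP (by linarith) (by linarith)
        exact Finset.prod_nonneg fun i _ => (hd i).le
  exact inv_anti₀ (Real.sqrt_pos.2 (by positivity)) (Real.sqrt_le_sqrt hfin)

def flp {N : ℕ} (a b : Fin N) (ω : Fin N → Fin N → Bool) : Fin N → Fin N → Bool :=
  fun i k => if (i = a ∧ k = b) ∨ (i = b ∧ k = a) then !ω i k else ω i k

lemma flp_inv {N : ℕ} (a b : Fin N) : Function.Involutive (flp a b) := by
  intro ω
  funext i k
  unfold flp
  split_ifs <;> simp

lemma rsym_flip {N : ℕ} (a b : Fin N) (ω : Fin N → Fin N → Bool) (i k : Fin N) :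
    rsym (flp a b ω) i k = if (i = a ∧ k = b) ∨ (i = b ∧ k = a) then - rsym ω i k else rsym ω i k := by
  have hr : ∀ x : Bool, rad (!x) = - rad x := by intro x; cases x <;> simp [rad]
  unfold rsym flp
  split_ifs <;> first | rfl | (exfalso; tauto) | (rw [hr])

lemma rsym_sq {N : ℕ} (ω : Fin N → Fin N → Bool) (i k : Fin N) : rsym ω i k * rsym ω i k = 1 := by
  have hr : ∀ x : Bool, rad x * rad x = 1 := by intro x; cases x <;> simp [rad]
  unfold rsym
  split_ifs <;> exact hr _

lemma sum_zero_of_flip {N : ℕ} (a b : Fin N) (F : (Fin N → Fin N → Bool) → ℝ)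
    (h : ∀ ω, F (flp a b ω) = - F ω) : ∑ ω, F ω = 0 := by
  have h1 := Equiv.sum_comp (Function.Involutive.toPerm (flp a b) (flp_inv a b)) F
  have h2 : ∑ ω, F ((Function.Involutive.toPerm (flp a b) (flp_inv a b)) ω) = - ∑ ω, F ω := by
    rw [← Finset.sum_neg_distrib]
    exact Finset.sum_congr rfl fun ω _ => h ω
  linarith

lemma corr_zero {N : ℕ} (i j k l k' l' : Fin N) (hij : i ≠ j) (hkl : k ≠ l) (hk : k ≠ j) :
    ∑ ω, (rsym ω i k * rsym ω i l) * (rsym ω j k' * rsym ω j l') = 0 := by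
  apply sum_zero_of_flip i k
  intro ω
  rw [rsym_flip, rsym_flip, rsym_flip, rsym_flip, if_pos (by tauto), if_neg (by grind), if_neg (by grind),
    if_neg (by grind)]
  ring

lemma corr_zero' {N : ℕ} (i j k l k' l' : Fin N) (hij : i ≠ j) (hkl : k ≠ l) :
    ∑ ω, (rsym ω i k * rsym ω i l) * (rsym ω j k' * rsym ω j l') = 0 := by
  by_cases hk : k = j
  · have := corr_zero i j l k k' l' hij hkl.symm (by grind)
    rw [← this]
    exact Finset.sum_congr rfl fun ω _ => by ring
  · exact corr_zero i j k l k' l' hij hkl hk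

lemma corr_zero_diag {N : ℕ} (i k l k' l' : Fin N) (hkl : k ≠ l) (h1 : k ≠ k') (h2 : k ≠ l') :
    ∑ ω, (rsym ω i k * rsym ω i l) * (rsym ω i k' * rsym ω i l') = 0 := by
  apply sum_zero_of_flip i k
  intro ω
  rw [rsym_flip, rsym_flip, rsym_flip, rsym_flip, if_pos (by tauto), if_neg (by grind), if_neg (by grind),
    if_neg (by grind)]
  ring

def U {N : ℕ} (ω : Fin N → Fin N → Bool) (i : Fin N) (p : Fin N × Fin N) : ℝ :=
  if p.1 = p.2 then 0 else rsym ω i p.1 * rsym ω i p.2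

lemma U_off {N : ℕ} (i j : Fin N) (hij : i ≠ j) (p q : Fin N × Fin N) :
    ∑ ω, U ω i p * U ω j q = 0 := by
  unfold U
  by_cases hp : p.1 = p.2
  · simp [hp]
  by_cases hq : q.1 = q.2
  · simp [hq]
  simp only [hp, hq, if_false]
  exact corr_zero' _ _ _ _ _ _ hij hp

lemma U_diag {N : ℕ} (i : Fin N) (p q : Fin N × Fin N) :
    ∑ ω, U ω i p * U ω i q = (Fintype.card (Fin N → Fin N → Bool) : ℝ) *
      ((if p = q then (if p.1 = p.2 then 0 else 1) else 0) + (if p.swap = q then (if p.1 = p.2 then 0 else 1) else 0)) := by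
  obtain ⟨k, l⟩ := p
  obtain ⟨k', l'⟩ := q
  unfold U
  by_cases hp : k = l
  · simp [hp]
  by_cases hq : k' = l'
  · have h1 : ¬ (k = k' ∧ l = l') := by grind
    have h2 : ¬ (l = k' ∧ k = l') := by grind
    simp [hq]
    grind
  simp only [hp, hq, if_false, Prod.swap_prod_mk, Prod.mk.injEq]
  have hsq := rsym_sq (N := N)
  by_cases h1 : k = k' ∧ l = l'
  · obtain ⟨rfl, rfl⟩ := h1
    have : ∀ ω : Fin N → Fin N → Bool, rsym ω i k * rsym ω i l * (rsym ω i k * rsym ω i l) = 1 := by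
      intro ω; rw [mul_mul_mul_comm, hsq, hsq, one_mul]
    simp [this, Ne.symm hp]
  by_cases h2 : l = k' ∧ k = l'
  · obtain ⟨rfl, rfl⟩ := h2
    have : ∀ ω : Fin N → Fin N → Bool, rsym ω i k * rsym ω i l * (rsym ω i l * rsym ω i k) = 1 := by
      intro ω; rw [mul_comm (rsym ω i l), mul_mul_mul_comm, hsq, hsq, one_mul]
    simp [this, hp]
  rw [if_neg h1, if_neg h2, add_zero, mul_zero]
  by_cases hk : k ≠ k' ∧ k ≠ l'
  · exact corr_zero_diag _ _ _ _ _ hp hk.1 hk.2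
  · have := corr_zero_diag i l k k' l' (Ne.symm hp) (by grind) (by grind)
    rw [← this]
    exact Finset.sum_congr rfl fun ω _ => by ring

lemma X_eq {N : ℕ} (α : Fin N → ℝ) (hα : ∑ k, (α k) ^ 2 = 1) (ω : Fin N → Fin N → Bool) (i : Fin N) :
    (∑ k, rsym ω i k * α k)^2 - 1 = ∑ p : Fin N × Fin N, (α p.1 * α p.2) * U ω i p := by
  have h1 : (1:ℝ) = ∑ p : Fin N × Fin N, if p.1 = p.2 then α p.1 * α p.2 else 0 := by
    rw [Fintype.sum_prod_type]
    simp [← hα, sq]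
  have h2 : (∑ k, rsym ω i k * α k)^2 = ∑ p : Fin N × Fin N, (rsym ω i p.1 * α p.1) * (rsym ω i p.2 * α p.2) := by
    rw [sq, Finset.sum_mul_sum, Fintype.sum_prod_type]
  rw [h1, h2, ← Finset.sum_sub_distrib]
  refine Finset.sum_congr rfl fun p _ => ?_
  unfold U
  split_ifs with h
  · rw [← h]
    linear_combination (α p.1)^2 * rsym_sq ω i p.1
  · ring

lemma second_moment {N n : ℕ} (hn : n ≤ N) (α : Fin N → ℝ) (hα : ∑ k, (α k) ^ 2 = 1) :
    ∑ ω : Fin N → Fin N → Bool, (∑ i, wt N n i * ((∑ k, rsym ω i k * α k)^2 - 1))^2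
      ≤ (Fintype.card (Fin N → Fin N → Bool) : ℝ) * (2 * n) := by
  have hoff : ∀ i j : Fin N, ∑ ω : Fin N → Fin N → Bool,
      ((∑ k, rsym ω i k * α k)^2 - 1) * ((∑ k, rsym ω j k * α k)^2 - 1)
      = ∑ p : Fin N × Fin N, ∑ q : Fin N × Fin N, (α p.1 * α p.2) * (α q.1 * α q.2) * ∑ ω, U ω i p * U ω j q := by
    intro i j
    simp_rw [X_eq α hα, Finset.sum_mul_sum]
    rw [Finset.sum_comm]
    refine Finset.sum_congr rfl fun p _ => ?_
    rw [Finset.sum_comm]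
    refine Finset.sum_congr rfl fun q _ => ?_
    rw [Finset.mul_sum]
    refine Finset.sum_congr rfl fun ω _ => ?_
    ring
  have h0 : ∀ i j : Fin N, i ≠ j → ∑ ω : Fin N → Fin N → Bool,
      ((∑ k, rsym ω i k * α k)^2 - 1) * ((∑ k, rsym ω j k * α k)^2 - 1) = 0 := by
    intro i j hij
    rw [hoff]
    simp [U_off i j hij]
  have hd : ∀ i : Fin N, ∑ ω : Fin N → Fin N → Bool,
      ((∑ k, rsym ω i k * α k)^2 - 1) * ((∑ k, rsym ω i k * α k)^2 - 1) ≤ (Fintype.card (Fin N → Fin N → Bool) : ℝ) * 2 := by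
    intro i
    rw [hoff]
    set K := (Fintype.card (Fin N → Fin N → Bool) : ℝ) with hK
    have hK0 : 0 ≤ K := by positivity
    calc ∑ p : Fin N × Fin N, ∑ q : Fin N × Fin N, (α p.1 * α p.2) * (α q.1 * α q.2) * ∑ ω, U ω i p * U ω i q
        = ∑ p : Fin N × Fin N, K * (if p.1 = p.2 then 0 else 2 * (α p.1^2 * α p.2^2)) := by
          refine Finset.sum_congr rfl fun p _ => ?_
          simp_rw [U_diag, ← hK, mul_add, Finset.sum_add_distrib, mul_ite, mul_zero, Finset.sum_ite_eq]
          simp only [Finset.mem_univ, if_true, Prod.fst_swap, Prod.snd_swap]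
          split_ifs <;> ring
      _ ≤ ∑ p : Fin N × Fin N, K * (2 * (α p.1^2 * α p.2^2)) := by
          gcongr with p
          split_ifs
          · positivity
          · exact le_rfl
      _ = K * 2 := by
          rw [← Finset.mul_sum, ← Finset.mul_sum, Fintype.sum_prod_type]
          simp_rw [← Finset.mul_sum, hα]
          simp [hα]
  have hww : ∀ i, wt N n i * wt N n i = wt N n i := by intro i; unfold wt; split_ifs <;> norm_num
  have hw0 : ∀ i, 0 ≤ wt N n i := by intro i; unfold wt; split_ifs <;> norm_num
  have hsum : ∑ i, wt N n i = n := by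
    have := sum_wt hn (fun _ => 1)
    simp at this
    linarith
  calc ∑ ω : Fin N → Fin N → Bool, (∑ i, wt N n i * ((∑ k, rsym ω i k * α k)^2 - 1))^2
      = ∑ i, ∑ j, wt N n i * wt N n j * ∑ ω : Fin N → Fin N → Bool,
      ((∑ k, rsym ω i k * α k)^2 - 1) * ((∑ k, rsym ω j k * α k)^2 - 1) := by
        simp_rw [sq (∑ i, wt N n i * _), Finset.sum_mul_sum]
        rw [Finset.sum_comm]
        refine Finset.sum_congr rfl fun i _ => ?_
        rw [Finset.sum_comm]
        refine Finset.sum_congr rfl fun j _ => ?_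
        rw [Finset.mul_sum]
        refine Finset.sum_congr rfl fun ω _ => ?_
        ring
    _ = ∑ i, wt N n i * ∑ ω : Fin N → Fin N → Bool,
      ((∑ k, rsym ω i k * α k)^2 - 1) * ((∑ k, rsym ω i k * α k)^2 - 1) := by
        refine Finset.sum_congr rfl fun i _ => ?_
        rw [Finset.sum_eq_single i]
        · rw [hww]
        · intro j _ hj
          rw [h0 i j hj.symm, mul_zero]
        · simp
    _ ≤ ∑ i, wt N n i * ((Fintype.card (Fin N → Fin N → Bool) : ℝ) * 2) := by
        gcongr with i
        · exact hw0 i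
        · exact hd i
    _ = _ := by
        rw [← Finset.sum_mul, hsum]; ring

lemma first_moment {N n : ℕ} (α : Fin N → ℝ) (hα : ∑ k, (α k) ^ 2 = 1) :
    ∑ ω : Fin N → Fin N → Bool, (∑ i, wt N n i * ((∑ k, rsym ω i k * α k)^2 - 1)) = 0 := by
  have hU : ∀ (i : Fin N) (p : Fin N × Fin N), ∑ ω, U ω i p = 0 := by
    intro i p
    unfold U
    by_cases hp : p.1 = p.2
    · simp [hp]
    simp only [hp, if_false]
    apply sum_zero_of_flip i p.1
    intro ω
    rw [rsym_flip, rsym_flip, if_pos (by tauto), if_neg (by grind)]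
    ring
  rw [Finset.sum_comm]
  refine Finset.sum_eq_zero fun i _ => ?_
  rw [← Finset.mul_sum]
  simp_rw [X_eq α hα]
  rw [Finset.sum_comm]
  simp_rw [← Finset.mul_sum, hU]
  simp
lemma conv_exp (k u V : ℝ) (hu : 0 < u) (huV : u ≤ V) (h : Real.exp (k * V) < 1 + 2 * V) :
    Real.exp (k * u) < 1 + 2 * u := by
  have hV : 0 < V := lt_of_lt_of_le hu huV
  have hθ0 : 0 < u / V := by positivity
  have hθ1 : u / V ≤ 1 := by rw [div_le_one hV]; exact huV
  have := convexOn_exp.2 (Set.mem_univ (k*V)) (Set.mem_univ 0) hθ0.le (by linarith : 0 ≤ 1 - u/V) (by ring)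
  simp only [smul_eq_mul, mul_zero, add_zero, Real.exp_zero, mul_one] at this
  have e : u / V * (k * V) = k * u := by field_simp
  have e2 : u / V * (2 * V) = 2 * u := by field_simp
  rw [e] at this
  nlinarith [mul_lt_mul_of_pos_left h hθ0]

lemma cant1 (ε : ℝ) (h0 : 0 < ε) (h1 : ε ≤ 7/10) :
    Real.exp ((1 - 2*ε/3) * (6/5*(1+2*ε))) < 1 + 2 * (6/5*(1+2*ε)) := by
  rw [← Real.lt_log_iff_exp_lt (by positivity)]
  have e : 1 + 2 * (6/5*(1+2*ε)) = (17/5) * (1 + 24/17*ε) := by ring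
  rw [e, Real.log_mul (by norm_num) (by positivity)]
  have a1 : (61/50 : ℝ) < Real.log (17/5) := by
    rw [Real.lt_log_iff_exp_lt (by norm_num)]
    have := Real.exp_bound' (x := 61/100) (by norm_num) (by norm_num) (n := 6) (by norm_num)
    simp [Finset.sum_range_succ, Nat.factorial] at this
    have e : Real.exp (61/50) = Real.exp (61/100) ^ 2 := by rw [← Real.exp_nat_mul]; norm_num
    rw [e]
    have h3 : Real.exp (61/100) ≤ 1.842 := this.trans (by norm_num)
    calc Real.exp (61/100) ^ 2 ≤ 1.842^2 := by gcongr
      _ < _ := by norm_num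
  have a2 := Real.le_log_one_add_of_nonneg (x := 24/17*ε) (by positivity)
  have a3 : 8/5*ε - 8/5*ε^2 - 1/50 < 2 * (24/17*ε) / (24/17*ε + 2) := by
    rw [lt_div_iff₀ (by positivity)]
    have : 0 < ε^3 := by positivity
    nlinarith [sq_nonneg (ε - 0.185)]
  nlinarith

lemma cant2 (ε : ℝ) (h0 : 7/10 ≤ ε) (h1 : ε ≤ 1) :
    Real.exp ((1 - 2*ε/3) * (5*ε^2)) < 1 + 2 * (5*ε^2) := by
  have a1 : Real.exp (5/3) < 5.9 := by
    have := Real.exp_bound' (x := 5/6) (by norm_num) (by norm_num) (n := 5) (by norm_num)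
    simp [Finset.sum_range_succ, Nat.factorial] at this
    have e : Real.exp (5/3) = Real.exp (5/6) ^ 2 := by rw [← Real.exp_nat_mul]; norm_num
    rw [e]
    have h3 : Real.exp (5/6) ≤ 2.4 := this.trans (by norm_num)
    calc Real.exp (5/6) ^ 2 ≤ 2.4^2 := by gcongr
      _ < _ := by norm_num
  have a2 : (1 - 2*ε/3) * (5*ε^2) ≤ 5/3 := by
    nlinarith [mul_nonneg (sq_nonneg (ε-1)) (by linarith : 0 ≤ 1 + 2*ε)]
  have := Real.exp_le_exp.2 a2
  nlinarith

lemma log_ub (x : ℝ) (h0 : 0 ≤ x) (h1 : x ≤ 1) :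
    Real.log (1+x) ≤ x - x^2/2 + x^3/3 - x^4/4 + x^5/5 - x^6/12 := by
  let F : ℝ → ℝ := fun x => x - x^2/2 + x^3/3 - x^4/4 + x^5/5 - x^6/12 - Real.log (1+x)
  have hF : ∀ y : ℝ, 0 ≤ y → HasDerivAt F (1 - y + y^2 - y^3 + y^4 - y^5/2 - 1/(1+y)) y := by
    intro y hy
    have hl : HasDerivAt (fun y : ℝ => Real.log (1+y)) (1/(1+y)) y :=
      ((hasDerivAt_id y).const_add 1).log (by simp; linarith)
    have hpow : ∀ n : ℕ, HasDerivAt (fun y : ℝ => y^n) (n * y^(n-1)) y := fun n => hasDerivAt_pow n y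
    have := (((((((hasDerivAt_id y).sub ((hpow 2).div_const 2)).add ((hpow 3).div_const 3)).sub
      ((hpow 4).div_const 4)).add ((hpow 5).div_const 5)).sub ((hpow 6).div_const 12)).sub hl)
    refine HasDerivAt.congr_deriv (f := F) this ?_
    norm_num
    ring
  have hmono : MonotoneOn F (Set.Icc 0 1) := by
    apply monotoneOn_of_deriv_nonneg (convex_Icc 0 1)
    · intro y hy; exact (hF y hy.1).continuousAt.continuousWithinAt
    · intro y hy; rw [interior_Icc] at hy; exact (hF y hy.1.le).differentiableAt.differentiableWithinAt
    · intro y hy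
      rw [interior_Icc] at hy
      rw [(hF y hy.1.le).deriv]
      have hy0 := hy.1
      have hy1 := hy.2
      have : 1 - y + y^2 - y^3 + y^4 - y^5/2 - 1/(1+y) = y^5*(1-y)/(2*(1+y)) := by field_simp; ring
      rw [this]
      have : 0 ≤ 1 - y := by linarith
      positivity
  have := hmono (Set.left_mem_Icc.2 zero_le_one) (⟨h0, h1⟩ : x ∈ Set.Icc 0 1) h0
  simp [F] at this
  linarith

lemma chern1 (ε n : ℝ) (h0 : 0 < ε) (h1 : ε ≤ 7/10) (hn : 6/5*(1+2*ε) ≤ n*ε^2/4) :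
    - Real.log (1 - ε^2) < n * (ε*(1+ε)/(1+ε) - Real.log (1+ε) - ε^2/2 + ε^3/3) := by
  have e : ε*(1+ε)/(1+ε) = ε := by field_simp
  rw [e]
  have a1 := log_ub ε h0.le (by linarith)
  have hx : ε^2 ≤ 49/100 := by nlinarith
  have a2 := Real.abs_log_sub_add_sum_range_le (x := ε^2) (by rw [abs_of_nonneg (by positivity)]; linarith) 3
  rw [abs_of_nonneg (by positivity : 0 ≤ ε^2)] at a2
  simp [Finset.sum_range_succ] at a2
  have a3 := (abs_le.1 a2).1
  have a4 : (ε^2)^4/(1-ε^2) ≤ 2 * ε^8 := by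
    rw [div_le_iff₀ (by linarith)]
    have : 0 ≤ ε^8 := by positivity
    nlinarith
  have hn0 : 0 < n := by
    by_contra h
    push Not at h
    nlinarith [mul_nonneg (neg_nonneg.2 h) (sq_nonneg ε)]
  have a5 : n * (ε^4/4 - ε^5/5 + ε^6/12) ≤ n * (ε - Real.log (1+ε) - ε^2/2 + ε^3/3) := by
    exact mul_le_mul_of_nonneg_left (by linarith) hn0.le
  have a6 : 4*ε^2*(6/5*(1+2*ε))*(1/4 - ε/5 + ε^2/12) ≤ n * (ε^4/4 - ε^5/5 + ε^6/12) := by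
    have : 0 ≤ 4*ε^2*(1/4 - ε/5 + ε^2/12) := by
      have : 0 ≤ 1/4 - ε/5 + ε^2/12 := by nlinarith
      positivity
    nlinarith [mul_le_mul_of_nonneg_right hn this]
  have a7 : 1 + ε^2/2 + ε^4/3 + 2*ε^6 < 4*(6/5*(1+2*ε))*(1/4 - ε/5 + ε^2/12) := by
    have b1 : ε^4 ≤ 49/100*ε^2 := by nlinarith [sq_nonneg ε]
    have b2 : ε^6 ≤ 49/100*(49/100*ε^2) := by nlinarith [sq_nonneg (ε^2)]
    nlinarith [mul_nonneg h0.le (by linarith : 0 ≤ 7/10 - ε), mul_nonneg (mul_nonneg h0.le h0.le) (by linarith : 0 ≤ 7/10 - ε), mul_nonneg h0.le (sq_nonneg (7/10-ε))]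
  have a8 := mul_lt_mul_of_pos_left a7 (by positivity : 0 < ε^2)
  norm_num at a3
  nlinarith

lemma chern2 (ε n : ℝ) (h0 : 7/10 ≤ ε) (h1 : ε ≤ 1) (hn : 20 ≤ n) :
    - Real.log (1 - (7/10)^2) < n * ((7/10)*(1+ε)/(1+7/10) - Real.log (1+7/10) - ε^2/2 + ε^3/3) := by
  have a1 := log_ub (7/10) (by norm_num) (by norm_num)
  have a2 : -(7/10 : ℝ) ≤ Real.log (1 - (7/10)^2) := by
    rw [Real.le_log_iff_exp_le (by norm_num), Real.exp_neg]
    have := Real.quadratic_le_exp_of_nonneg (x := 7/20) (by norm_num)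
    have e : Real.exp (7/10) = Real.exp (7/20) ^ 2 := by rw [← Real.exp_nat_mul]; norm_num
    have h3 : (1.97:ℝ) ≤ Real.exp (7/10) := by
      rw [e]
      calc (1.97:ℝ) ≤ 1.41^2 := by norm_num
        _ ≤ _ := by gcongr; refine le_trans ?_ this; norm_num
    calc (Real.exp (7/10))⁻¹ ≤ (1.97)⁻¹ := by gcongr
      _ ≤ _ := by norm_num
  have a3 : (0.0361:ℝ) ≤ (7/10)*(1+ε)/(1+7/10) - Real.log (1+7/10) - ε^2/2 + ε^3/3 := by
    norm_num at a1 ⊢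
    nlinarith [mul_nonneg (by linarith : 0 ≤ ε - 7/10) (sq_nonneg (ε - 1/2)), mul_nonneg (by linarith : 0 ≤ ε - 7/10) (by linarith : 0 ≤ 1 - ε)]
  nlinarith

lemma prob_le {N : ℕ} (A : Set (Fin N → Fin N → Bool)) (f : (Fin N → Fin N → Bool) → ℝ)
    (h0 : ∀ ω, 0 ≤ f ω) (h1 : ∀ ω ∈ A, 1 ≤ f ω) (B : ℝ)
    (hB : ∑ ω, f ω ≤ (Fintype.card (Fin N → Fin N → Bool) : ℝ) * B) :
    μsym N A ≤ ENNReal.ofReal B := by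
  classical
  have hK : 0 < (Fintype.card (Fin N → Fin N → Bool) : ℝ) := by exact_mod_cast Fintype.card_pos
  unfold μsym
  rw [PMF.toMeasure_uniformOfFintype_apply A (Set.toFinite A).measurableSet]
  rw [← ENNReal.ofReal_natCast, ← ENNReal.ofReal_natCast, ← ENNReal.ofReal_div_of_pos hK]
  apply ENNReal.ofReal_le_ofReal
  rw [div_le_iff₀ hK, mul_comm]
  refine le_trans ?_ hB
  rw [← Set.toFinset_card]
  calc (A.toFinset.card : ℝ) = ∑ ω ∈ A.toFinset, 1 := by simp
    _ ≤ ∑ ω ∈ A.toFinset, f ω := Finset.sum_le_sum fun ω h => h1 ω (by simpa using h)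
    _ ≤ ∑ ω, f ω := Finset.sum_le_sum_of_subset_of_nonneg (Finset.subset_univ _) fun ω _ _ => h0 ω

lemma S_eq {N n : ℕ} (hn : n ≤ N) (α : Fin N → ℝ) (ω : Fin N → Fin N → Bool) :
    S hn α ω = (∑ i, wt N n i * (∑ k, rsym ω i k * α k)^2) / N := by
  unfold S Q
  rw [sum_wt hn (fun i => ((Real.sqrt N)⁻¹ * ∑ k, rsym ω i k * α k)^2), Finset.sum_div]
  refine Finset.sum_congr rfl fun i _ => ?_
  rw [mul_pow, inv_pow, Real.sq_sqrt (by positivity)]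
  ring

lemma final_cant {N n : ℕ} (hN : 1 ≤ N) (hn1 : 1 ≤ n) (hnN : n ≤ N)
    (α : Fin N → ℝ) (hα : ∑ k, (α k) ^ 2 = 1) (ε : ℝ) (hε0 : 0 < ε)
    (h : Real.exp ((1 - 2*ε/3) * (n*ε^2/4)) < 1 + 2 * (n*ε^2/4)) :
    (μsym N) {ω | S hnN α ω > (1 + ε) * n / N}
      < ENNReal.ofReal (Real.exp (-((n : ℝ) / 2) * (ε ^ 2 / 2 - ε ^ 3 / 3))) := by
  have hn0 : (0:ℝ) < n := by exact_mod_cast hn1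
  have hN0 : (0:ℝ) < N := by exact_mod_cast hN
  set X : (Fin N → Fin N → Bool) → ℝ := fun ω => ∑ i, wt N n i * ((∑ k, rsym ω i k * α k)^2 - 1) with hX
  have hsum : ∑ i, wt N n i = n := by
    have := sum_wt hnN (fun _ => 1)
    simp at this
    linarith
  have hXW : ∀ ω, X ω = (∑ i, wt N n i * (∑ k, rsym ω i k * α k)^2) - n := by
    intro ω
    simp only [hX, mul_sub, mul_one, Finset.sum_sub_distrib, hsum]
  have m1 : ∑ ω, X ω = 0 := first_moment α hα
  have m2 : ∑ ω, X ω ^ 2 ≤ _ := second_moment hnN α hα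
  have hpos : 0 < ε * n + 2/ε := by positivity
  have hb := prob_le {ω | S hnN α ω > (1 + ε) * n / N} (fun ω => ((X ω + 2/ε)/(ε*n + 2/ε))^2)
    (fun ω => sq_nonneg _) (by
      intro ω hω
      simp only [Set.mem_ofPred_eq, gt_iff_lt, S_eq] at hω
      rw [div_lt_div_iff_of_pos_right hN0] at hω
      have := hXW ω
      apply one_le_pow₀
      rw [le_div_iff₀ hpos]
      linarith) (1 / (1 + 2 * (n*ε^2/4))) (by
      simp_rw [div_pow]
      rw [← Finset.sum_div, div_le_iff₀ (by positivity)]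
      simp_rw [add_sq (X _), Finset.sum_add_distrib, ← Finset.sum_mul, ← Finset.mul_sum, m1]
      simp only [Finset.sum_const, Finset.card_univ, nsmul_eq_mul, mul_zero, zero_mul, add_zero]
      have e : 1 / (1 + 2 * (n*ε^2/4)) * (ε * n + 2/ε)^2 = 2 * n + (2/ε)^2 := by
        field_simp
        ring
      rw [mul_assoc, e, mul_add]
      linarith)
  refine lt_of_le_of_lt hb ?_
  rw [ENNReal.ofReal_lt_ofReal_iff (Real.exp_pos _)]
  have e : -((n : ℝ) / 2) * (ε ^ 2 / 2 - ε ^ 3 / 3) = - ((1 - 2*ε/3) * (n*ε^2/4)) := by ring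
  rw [e, Real.exp_neg, one_div]
  exact inv_strictAnti₀ (Real.exp_pos _) h

lemma final_chern {N n : ℕ} (hN : 1 ≤ N) (hnN : n ≤ N)
    (α : Fin N → ℝ) (hα : ∑ k, (α k) ^ 2 = 1) (ε c : ℝ) (c0 : 0 < c) (c1 : c < 1)
    (h : - Real.log (1 - c^2) < n * (c*(1+ε)/(1+c) - Real.log (1+c) - ε^2/2 + ε^3/3)) :
    (μsym N) {ω | S hnN α ω > (1 + ε) * n / N}
      < ENNReal.ofReal (Real.exp (-((n : ℝ) / 2) * (ε ^ 2 / 2 - ε ^ 3 / 3))) := by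
  have hN0 : (0:ℝ) < N := by exact_mod_cast hN
  have hc2 : 0 < 1 - c^2 := by nlinarith
  have hm := mgf_real hnN α hα c c0 c1
  set t := c / (2 * (1 + c)) with ht
  have ht0 : 0 < t := by positivity
  have hb := prob_le {ω | S hnN α ω > (1 + ε) * n / N}
    (fun ω => Real.exp (t * ∑ i, wt N n i * (∑ k, rsym ω i k * α k)^2) * Real.exp (-(t * ((1+ε)*n))))
    (fun ω => by positivity) (by
      intro ω hω
      simp only [Set.mem_ofPred_eq, gt_iff_lt, S_eq] at hω
      rw [div_lt_div_iff_of_pos_right hN0] at hω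
      rw [← Real.exp_add]
      apply Real.one_le_exp
      have := mul_lt_mul_of_pos_left hω ht0
      linarith)
    ((Real.sqrt (((1+c)⁻¹)^n * (1 - c^2)))⁻¹ * Real.exp (-(t * ((1+ε)*n)))) (by
      rw [← Finset.sum_mul, ← mul_assoc (Fintype.card _ : ℝ)]
      exact mul_le_mul_of_nonneg_right hm (Real.exp_pos _).le)
  refine lt_of_le_of_lt hb ?_
  rw [ENNReal.ofReal_lt_ofReal_iff (Real.exp_pos _)]
  have e1 : (Real.sqrt (((1+c)⁻¹)^n * (1 - c^2)))⁻¹ = Real.exp (n/2 * Real.log (1+c) - Real.log (1-c^2)/2) := by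
    have : ((1+c)⁻¹)^n * (1 - c^2) = Real.exp (-(n * Real.log (1+c)) + Real.log (1 - c^2)) := by
      rw [Real.exp_add, Real.exp_neg, Real.exp_nat_mul, Real.exp_log hc2, Real.exp_log (by positivity), inv_pow]
    rw [this, Real.sqrt_eq_rpow, ← Real.exp_mul, ← Real.exp_neg]
    congr 1
    ring
  rw [e1, ← Real.exp_add, Real.exp_lt_exp]
  have e2 : t * ((1+ε)*n) = n * (c*(1+ε)/(1+c)) / 2 := by
    rw [ht]; field_simp
  rw [e2]
  linarith

theorem stmt2 {N n : ℕ} (hN : 1 ≤ N) (hn1 : 1 ≤ n) (hnN : n ≤ N)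
    (α : Fin N → ℝ) (hα : ∑ k, (α k) ^ 2 = 1)
    (ε : ℝ) (hε0 : 0 < ε) (hε1 : ε < 1) :
    (μsym N) {ω | S hnN α ω > (1 + ε) * n / N}
      < ENNReal.ofReal (Real.exp (-((n : ℝ) / 2) * (ε ^ 2 / 2 - ε ^ 3 / 3))) := by
  have hn0 : (0:ℝ) < n := by exact_mod_cast hn1
  have hu : 0 < n*ε^2/4 := by positivity
  rcases le_total ε (7/10) with hε | hε
  · rcases le_total (n*ε^2/4) (6/5*(1+2*ε)) with hc | hc
    · exact final_cant hN hn1 hnN α hα ε hε0 (conv_exp _ _ _ hu hc (cant1 ε hε0 hε))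
    · exact final_chern hN hnN α hα ε ε hε0 hε1 (chern1 ε n hε0 hε hc)
  · rcases le_total (n:ℝ) 20 with hc | hc
    · refine final_cant hN hn1 hnN α hα ε hε0 (conv_exp _ _ _ hu ?_ (cant2 ε hε hε1.le))
      nlinarith [sq_nonneg ε]
    · exact final_chern hN hnN α hα ε (7/10) (by norm_num) (by norm_num) (chern2 ε n hε hε1.le hc)
end
end

section
/- Let ε > 0 and β > 0 with ε²/2 − ε³/3 > 0, let p_1, …, p_m be m points in ℝ^N, and suppose n ≥ ((4+2β)/(ε²/2 − ε³/3))·log m with n ≤ N. Let f : ℝ^N → ℝ^n be the random linear map f(x) = n^{−1/2} R x, where R is the n × N partial random symmetric Bernoulli matrix. Then with probability at least 1 − m^{−β}, for every pair of points u, v among p_1,…,p_m one has (1−ε)·‖u−v‖₂² ≤ ‖f(u)−f(v)‖₂² ≤ (1+ε)·‖u−v‖₂². -/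
open MeasureTheory Finset

noncomputable section

/-- The random linear map `f(x) = n^{-1/2} R x`, where `R` is the partial random
symmetric Bernoulli matrix given by the first `n` rows of `rsym ω`. -/
def proj {N n : ℕ} (hn : n ≤ N) (ω : Fin N → Fin N → Bool)
    (x : Fin N → ℝ) (i : Fin n) : ℝ :=
  (Real.sqrt n)⁻¹ * ∑ k, rsym ω (Fin.castLE hn i) k * x k

def fl {E : Type*} [DecidableEq E] (e : E) (r : E → Bool) : E → Bool :=
  Function.update r e (!r e)

lemma fl_invol {E : Type*} [DecidableEq E] (e : E) : Function.Involutive (fl e) := by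
  intro r
  ext f
  by_cases h : f = e
  · subst h; simp [fl]
  · simp [fl, h]

lemma sum_fl {E : Type*} [DecidableEq E] [Fintype E] (e : E) (f : (E → Bool) → ℝ) :
    ∑ r, f (fl e r) = ∑ r, f r :=
  Equiv.sum_comp (fl_invol e).toPerm f

lemma rad_sq (b : Bool) : rad b * rad b = 1 := by cases b <;> simp [rad]
lemma rad_not (b : Bool) : rad (!b) = - rad b := by cases b <;> simp [rad]

lemma sum_pair_nonneg {E : Type*} [DecidableEq E] [Fintype E] (e : E) (f : (E → Bool) → ℝ)
    (h : ∀ r, 0 ≤ f r + f (fl e r)) : 0 ≤ ∑ r, f r := by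
  have h1 : 0 ≤ ∑ r, (f r + f (fl e r)) := Finset.sum_nonneg fun r _ => h r
  rw [Finset.sum_add_distrib, sum_fl] at h1
  linarith

lemma sinh_le_mul_cosh {y : ℝ} (hy : 0 ≤ y) : Real.sinh y ≤ y * Real.cosh y := by
  have hm : MonotoneOn (fun y => y * Real.cosh y - Real.sinh y) (Set.Ici 0) := by
    apply monotoneOn_of_deriv_nonneg (convex_Ici 0)
    · fun_prop
    · fun_prop
    · intro x hx
      simp only [interior_Ici, Set.mem_Ioi] at hx
      have : HasDerivAt (fun y => y * Real.cosh y - Real.sinh y)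
          (1 * Real.cosh x + x * Real.sinh x - Real.cosh x) x :=
        ((hasDerivAt_id x).mul (Real.hasDerivAt_cosh x)).sub (Real.hasDerivAt_sinh x)
      rw [this.deriv]
      have : 0 ≤ Real.sinh x := Real.sinh_nonneg_iff.2 hx.le
      nlinarith
  have := hm (Set.mem_Ici.2 le_rfl) (Set.mem_Ici.2 hy) hy
  simp at this
  linarith

lemma mul_sinh_le (y : ℝ) : y * Real.sinh y ≤ y ^ 2 * Real.cosh y := by
  rcases le_total 0 y with h | h
  · nlinarith [sinh_le_mul_cosh h]
  · have := sinh_le_mul_cosh (y := -y) (by linarith)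
    rw [Real.sinh_neg, Real.cosh_neg] at this
    nlinarith

lemma mul_sinh_nonneg (y : ℝ) : 0 ≤ y * Real.sinh y := by
  rcases le_total 0 y with h | h
  · exact mul_nonneg h (Real.sinh_nonneg_iff.2 h)
  · exact mul_nonneg_of_nonpos_of_nonpos h (Real.sinh_nonpos_iff.2 h)

lemma pair_ineq (h s t : ℝ) (h0 : 0 < h) (h8 : h ≤ 1 / 8) (s0 : 0 ≤ s) (s1 : s ≤ 1) :
    0 ≤ Real.exp (-(2 * h * t)) * (t + 2 * h * (1 + s) * (t ^ 2 + 2 * t * s))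
      + Real.exp (2 * h * t) * (- t + 2 * h * (1 + s) * (t ^ 2 - 2 * t * s)) := by
  have e1 : Real.exp (2 * h * t) = Real.cosh (2 * h * t) + Real.sinh (2 * h * t) :=
    (Real.cosh_add_sinh _).symm
  have e2 : Real.exp (-(2 * h * t)) = Real.cosh (2 * h * t) - Real.sinh (2 * h * t) :=
    (Real.cosh_sub_sinh _).symm
  rw [e1, e2]
  have k1 := mul_sinh_le (2 * h * t)
  have k2 := mul_sinh_nonneg (2 * h * t)
  set C := Real.cosh (2 * h * t)
  set S := Real.sinh (2 * h * t)
  have k1' : t * S ≤ 2 * h * t ^ 2 * C := by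
    have : h * (t * S) ≤ h * (2 * h * t ^ 2 * C) := by nlinarith
    exact le_of_mul_le_mul_left this h0
  have k2' : 0 ≤ t * S := by
    have : h * 0 ≤ h * (t * S) := by nlinarith
    exact le_of_mul_le_mul_left this h0
  have k3 : 1 + 4 * h * s * (1 + s) ≤ 1 + s := by
    have : 4 * h * (1 + s) ≤ 1 := by nlinarith
    nlinarith
  have k4 : t * S * (1 + 4 * h * s * (1 + s)) ≤ 2 * h * t ^ 2 * C * (1 + s) :=
    (mul_le_mul_of_nonneg_left k3 k2').trans (mul_le_mul_of_nonneg_right k1' (by linarith))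
  nlinarith

section lower
variable {E : Type*} [DecidableEq E] [Fintype E]

lemma edge_ineq (S : (E → Bool) → ℝ) (c : (E → Bool) → E → ℝ) (s : E → ℝ) (e : E)
    (hc : ∀ r, c (fl e r) e = c r e - 2 * rad (r e) * s e)
    (hS : ∀ r, S (fl e r) = S r - 4 * rad (r e) * c r e + 4 * s e)
    (s0 : 0 ≤ s e) (s1 : s e ≤ 1) (h : ℝ) (h0 : 0 < h) (h8 : h ≤ 1 / 8) :
    0 ≤ ∑ r, Real.exp (-h * S r) *
      (rad (r e) * c r e - s e + 2 * h * (1 + s e) * (c r e ^ 2 - s e ^ 2)) := by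
  apply sum_pair_nonneg e
  intro r
  have hr : rad (fl e r e) = - rad (r e) := by simp [fl, rad_not]
  rw [hc, hS, hr]
  have q := rad_sq (r e)
  set σ := rad (r e)
  set cc := c r e
  set ss := s e
  obtain ⟨t, ht⟩ : ∃ t, t = σ * cc - ss := ⟨_, rfl⟩
  have hcc : cc = σ * (t + ss) := by rw [ht]; linear_combination (-cc) * q
  have c2 : cc ^ 2 = (t + ss) ^ 2 := by rw [hcc]; linear_combination (t + ss) ^ 2 * q
  have e1 : Real.exp (-h * S r) = Real.exp (-h * (S r - 2 * t)) * Real.exp (-(2 * h * t)) := by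
    rw [← Real.exp_add]; ring_nf
  have e2 : Real.exp (-h * (S r - 4 * σ * cc + 4 * ss))
      = Real.exp (-h * (S r - 2 * t)) * Real.exp (2 * h * t) := by
    rw [← Real.exp_add]; congr 1; rw [ht]; ring
  have := mul_nonneg (Real.exp_pos (-h * (S r - 2 * t))).le (pair_ineq h ss t h0 h8 s0 s1)
  rw [e1, e2]
  have a1 : σ * cc = t + ss := by rw [ht]; ring
  have a2 : -σ * (cc - 2 * σ * ss) = - t + ss := by
    linear_combination -a1 + 2 * ss * q
  have a3 : (cc - 2 * σ * ss) ^ 2 = (t - ss) ^ 2 := by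
    linear_combination c2 - 4 * ss * a1 + 4 * ss ^ 2 * q
  rw [a1, a2, a3, c2]
  refine this.trans (le_of_eq ?_)
  ring

lemma mean_eq (S : (E → Bool) → ℝ) (c : (E → Bool) → E → ℝ) (s : E → ℝ)
    (hSc : ∀ r, S r = ∑ e, rad (r e) * c r e)
    (hc : ∀ e r, c (fl e r) e = c r e - 2 * rad (r e) * s e) :
    ∑ r, (S r - ∑ e, s e) = 0 := by
  have : ∀ r, S r - ∑ e, s e = ∑ e, (rad (r e) * c r e - s e) := by
    intro r; rw [hSc, Finset.sum_sub_distrib]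
  simp_rw [this]
  rw [Finset.sum_comm]
  apply Finset.sum_eq_zero
  intro e _
  have h1 : ∑ r, ((rad (r e) * c r e - s e) + (rad (fl e r e) * c (fl e r) e - s e)) = 0 := by
    apply Finset.sum_eq_zero
    intro r _
    have hr : rad (fl e r e) = - rad (r e) := by simp [fl, rad_not]
    rw [hc, hr]
    linear_combination 2 * s e * rad_sq (r e)
  rw [Finset.sum_add_distrib, sum_fl e (fun r => rad (r e) * c r e - s e)] at h1
  linarith

lemma assoc_ineq (S : (E → Bool) → ℝ) (A h : ℝ) (h0 : 0 ≤ h) (hm : ∑ r, (S r - A) = 0) :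
    ∑ r, Real.exp (-h * S r) * S r ≤ A * ∑ r, Real.exp (-h * S r) := by
  have h1 : ∀ r, Real.exp (-h * S r) * S r ≤
      A * Real.exp (-h * S r) + Real.exp (-h * A) * (S r - A) := by
    intro r
    have : (Real.exp (-h * S r) - Real.exp (-h * A)) * (S r - A) ≤ 0 := by
      rcases le_total (S r) A with k | k
      · apply mul_nonpos_of_nonneg_of_nonpos
        · rw [sub_nonneg, Real.exp_le_exp]; nlinarith
        · linarith
      · apply mul_nonpos_of_nonpos_of_nonneg
        · rw [sub_nonpos, Real.exp_le_exp]; nlinarith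
        · linarith
    linarith
  calc _ ≤ ∑ r, (A * Real.exp (-h * S r) + Real.exp (-h * A) * (S r - A)) :=
        Finset.sum_le_sum fun r _ => h1 r
    _ = _ := by
      rw [Finset.sum_add_distrib, ← Finset.mul_sum, ← Finset.mul_sum, hm]; ring

lemma deriv_ineq (S : (E → Bool) → ℝ) (c : (E → Bool) → E → ℝ) (s : E → ℝ)
    (hSc : ∀ r, S r = ∑ e, rad (r e) * c r e)
    (hc : ∀ e r, c (fl e r) e = c r e - 2 * rad (r e) * s e)
    (hS : ∀ e r, S (fl e r) = S r - 4 * rad (r e) * c r e + 4 * s e)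
    (s0 : ∀ e, 0 ≤ s e) (s1 : ∀ e, s e ≤ 1) (δ C : ℝ) (hδ : 0 ≤ δ)
    (H1 : ∀ r, ∑ e, (1 + s e) * c r e ^ 2 ≤ (1 + δ) * S r)
    (HC : δ * ∑ e, s e - ∑ e, s e ^ 2 ≤ C)
    (h : ℝ) (h0 : 0 < h) (h8 : h ≤ 1 / 8) :
    (∑ e, s e - 2 * h * C) * ∑ r, Real.exp (-h * S r)
      ≤ (1 + 2 * h) * ∑ r, Real.exp (-h * S r) * S r := by
  have k1 := Finset.sum_nonneg fun e (_ : e ∈ (Finset.univ : Finset E)) =>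
    edge_ineq S c s e (hc e) (hS e) (s0 e) (s1 e) h h0 h8
  rw [Finset.sum_comm] at k1
  simp_rw [← Finset.mul_sum] at k1
  have k2 : ∀ r, ∑ e, (rad (r e) * c r e - s e + 2 * h * (1 + s e) * (c r e ^ 2 - s e ^ 2))
      ≤ S r * (1 + 2 * h * (1 + δ)) - ∑ e, s e - 2 * h * ∑ e, s e ^ 2 := by
    intro r
    have a : ∑ e, (rad (r e) * c r e - s e + 2 * h * (1 + s e) * (c r e ^ 2 - s e ^ 2))
      = S r - ∑ e, s e + 2 * h * ∑ e, (1 + s e) * c r e ^ 2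
        - 2 * h * ∑ e, (1 + s e) * s e ^ 2 := by
      rw [hSc, Finset.mul_sum, Finset.mul_sum, ← Finset.sum_sub_distrib, ← Finset.sum_add_distrib,
        ← Finset.sum_sub_distrib]
      exact Finset.sum_congr rfl fun e _ => by ring
    have b : ∑ e, s e ^ 2 ≤ ∑ e, (1 + s e) * s e ^ 2 :=
      Finset.sum_le_sum fun e _ => by nlinarith [s0 e, mul_nonneg (s0 e) (sq_nonneg (s e))]
    rw [a]
    have := H1 r
    nlinarith
  have k3 : 0 ≤ ∑ r, Real.exp (-h * S r) *
      (S r * (1 + 2 * h * (1 + δ)) - ∑ e, s e - 2 * h * ∑ e, s e ^ 2) :=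
    k1.trans (Finset.sum_le_sum fun r _ => mul_le_mul_of_nonneg_left (k2 r) (Real.exp_pos _).le)
  have k4 : ∑ r, Real.exp (-h * S r) *
      (S r * (1 + 2 * h * (1 + δ)) - ∑ e, s e - 2 * h * ∑ e, s e ^ 2)
      = (1 + 2 * h * (1 + δ)) * ∑ r, Real.exp (-h * S r) * S r
        - (∑ e, s e + 2 * h * ∑ e, s e ^ 2) * ∑ r, Real.exp (-h * S r) := by
    generalize ∑ e, s e = a
    generalize ∑ e, s e ^ 2 = b
    rw [Finset.mul_sum, Finset.mul_sum, ← Finset.sum_sub_distrib]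
    exact Finset.sum_congr rfl fun e _ => by ring
  rw [k4] at k3
  have k5 := assoc_ineq S _ h h0.le (mean_eq S c s hSc hc)
  have F0 : 0 ≤ ∑ r, Real.exp (-h * S r) := Finset.sum_nonneg fun r _ => (Real.exp_pos _).le
  set F := ∑ r, Real.exp (-h * S r)
  set G := ∑ r, Real.exp (-h * S r) * S r
  set A := ∑ e, s e
  set B := ∑ e, s e ^ 2
  have k6 : 2 * h * δ * G ≤ 2 * h * δ * (A * F) := mul_le_mul_of_nonneg_left k5 (by positivity)
  have k7 : 2 * h * F * (δ * A - B) ≤ 2 * h * F * C := mul_le_mul_of_nonneg_left HC (by positivity)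
  nlinarith

lemma lower_mgf (S : (E → Bool) → ℝ) (c : (E → Bool) → E → ℝ) (s : E → ℝ)
    (hSc : ∀ r, S r = ∑ e, rad (r e) * c r e)
    (hc : ∀ e r, c (fl e r) e = c r e - 2 * rad (r e) * s e)
    (hS : ∀ e r, S (fl e r) = S r - 4 * rad (r e) * c r e + 4 * s e)
    (s0 : ∀ e, 0 ≤ s e) (s1 : ∀ e, s e ≤ 1) (δ C : ℝ) (hδ : 0 ≤ δ)
    (H1 : ∀ r, ∑ e, (1 + s e) * c r e ^ 2 ≤ (1 + δ) * S r)
    (HC : δ * ∑ e, s e - ∑ e, s e ^ 2 ≤ C)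
    (h : ℝ) (h0 : 0 ≤ h) (h8 : h ≤ 1 / 8) :
    ∑ r, Real.exp (-h * S r) ≤ Fintype.card (E → Bool) *
      Real.exp (C * h - (∑ e, s e + C) / 2 * Real.log (1 + 2 * h)) := by
  set A := ∑ e, s e with hA
  let G : ℝ → ℝ := fun h => (A + C) / 2 * Real.log (1 + 2 * h) - C * h
  have hd : ∀ h : ℝ, 0 < h → HasDerivAt (fun h => (∑ r, Real.exp (-h * S r)) * Real.exp (G h))
      ((∑ r, Real.exp (-h * S r) * (-1 * S r)) * Real.exp (G h) + (∑ r, Real.exp (-h * S r)) *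
        (Real.exp (G h) * ((A + C) / 2 * (2 / (1 + 2 * h)) - C))) h := by
    intro h hh
    have d1 : HasDerivAt (fun h => ∑ r, Real.exp (-h * S r))
        (∑ r, Real.exp (-h * S r) * (-1 * S r)) h := by
      apply HasDerivAt.fun_sum
      intro r _
      exact (((hasDerivAt_id h).neg).mul_const (S r)).exp
    have d2 : HasDerivAt G ((A + C) / 2 * (2 / (1 + 2 * h)) - C) h := by
      have := (((hasDerivAt_id h).const_mul 2).const_add 1).log (by simp; positivity)
      have := (this.const_mul ((A + C) / 2)).fun_sub ((hasDerivAt_id h).const_mul C)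
      simpa [G] using this
    exact d1.mul d2.exp
  have anti : AntitoneOn (fun h => (∑ r, Real.exp (-h * S r)) * Real.exp (G h))
      (Set.Icc 0 (1 / 8)) := by
    apply antitoneOn_of_deriv_nonpos (convex_Icc _ _)
    · apply ContinuousOn.mul (by fun_prop)
      apply ContinuousOn.rexp
      apply ContinuousOn.sub _ (by fun_prop)
      apply ContinuousOn.mul (by fun_prop)
      apply ContinuousOn.log (by fun_prop)
      intro x hx
      have := hx.1
      positivity
    · intro x hx
      rw [interior_Icc] at hx
      exact (hd x hx.1).differentiableAt.differentiableWithinAt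
    · intro x hx
      rw [interior_Icc] at hx
      rw [(hd x hx.1).deriv]
      have key := deriv_ineq S c s hSc hc hS s0 s1 δ C hδ H1 HC x hx.1 hx.2.le
      rw [← hA] at key
      have e1 : ∑ r, Real.exp (-x * S r) * (-1 * S r) = - ∑ r, Real.exp (-x * S r) * S r := by
        rw [← Finset.sum_neg_distrib]; exact Finset.sum_congr rfl fun r _ => by ring
      rw [e1]
      have hx1 : 0 < 1 + 2 * x := by linarith [hx.1]
      have e2 : (A + C) / 2 * (2 / (1 + 2 * x)) - C = (A - 2 * x * C) / (1 + 2 * x) := by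
        field_simp; ring
      rw [e2]
      have e3 : (A - 2 * x * C) / (1 + 2 * x) * ∑ r, Real.exp (-x * S r)
          ≤ ∑ r, Real.exp (-x * S r) * S r := by
        rw [div_mul_eq_mul_div, div_le_iff₀ hx1]; linarith
      have := mul_le_mul_of_nonneg_right e3 (Real.exp_pos (G x)).le
      linarith
  have fin := anti (Set.mem_Icc.2 ⟨le_rfl, by norm_num⟩) (Set.mem_Icc.2 ⟨h0, h8⟩) h0
  simp only [G, neg_zero, zero_mul, Real.exp_zero, mul_zero, add_zero, Real.log_one, sub_zero,
    mul_one, Finset.sum_const, Finset.card_univ, nsmul_eq_mul] at fin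
  have e4 : C * h - (A + C) / 2 * Real.log (1 + 2 * h)
     = -((A + C) / 2 * Real.log (1 + 2 * h) - C * h) := by ring
  rw [e4, Real.exp_neg, ← div_eq_mul_inv, le_div_iff₀ (Real.exp_pos _)]
  exact fin

end lower
section alg
variable {N : ℕ}

def wv (χ x : Fin N → ℝ) (e : Fin N × Fin N) (a : Fin N) : ℝ :=
  if e.1 < e.2 then (if a = e.1 then χ a * x e.2 else 0) + (if a = e.2 then χ a * x e.1 else 0)
  else if e.1 = e.2 then (if a = e.1 then χ a * x a else 0) else 0

def sgm (χ x : Fin N → ℝ) (e : Fin N × Fin N) : ℝ :=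
  if e.1 < e.2 then χ e.1 * x e.2 ^ 2 + χ e.2 * x e.1 ^ 2
  else if e.1 = e.2 then χ e.1 * x e.1 ^ 2 else 0

lemma dot_wv (χ x g : Fin N → ℝ) (e : Fin N × Fin N) :
    ∑ a, wv χ x e a * g a = if e.1 < e.2 then x e.2 * (χ e.1 * g e.1) + x e.1 * (χ e.2 * g e.2)
      else if e.1 = e.2 then x e.1 * (χ e.1 * g e.1) else 0 := by
  unfold wv
  split_ifs with h1 h2
  · simp only [add_mul, ite_mul, zero_mul, Finset.sum_add_distrib, Finset.sum_ite_eq',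
      Finset.mem_univ, if_true]
    ring
  · simp [ite_mul]; ring
  · simp

lemma wv_sq (χ x : Fin N → ℝ) (hχ : ∀ i, χ i * χ i = χ i) (e : Fin N × Fin N) :
    ∑ a, wv χ x e a ^ 2 = sgm χ x e := by
  simp_rw [pow_two]
  rw [dot_wv]
  obtain ⟨i, j⟩ := e
  rcases lt_trichotomy i j with h | h | h
  · simp [wv, sgm, h, h.ne, h.ne']
    linear_combination x j ^ 2 * hχ i + x i ^ 2 * hχ j
  · subst h
    simp [wv, sgm]
    linear_combination x i ^ 2 * hχ i
  · simp [sgm, h.ne', h.not_gt]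

lemma sum_edges (F : Fin N → Fin N → ℝ) (G : Fin N → ℝ) (hF : ∀ i j, F i j = F j i) :
    ∑ e : Fin N × Fin N, (if e.1 < e.2 then F e.1 e.2 else if e.1 = e.2 then G e.1 else 0)
      = (∑ i, ∑ j, F i j) / 2 - (∑ i, F i i) / 2 + ∑ i, G i := by
  rw [Fintype.sum_prod_type]
  set T := ∑ i, ∑ j, (if i < j then F i j else 0) with hT
  have hT' : T = ∑ i, ∑ j, (if j < i then F i j else 0) := by
    rw [hT, Finset.sum_comm]
    refine Finset.sum_congr rfl fun i _ => Finset.sum_congr rfl fun j _ => ?_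
    rw [hF]
  have e1 : ∑ i, ∑ j, F i j = T + T + ∑ i, F i i := by
    nth_rewrite 2 [hT']
    rw [hT, ← Finset.sum_add_distrib, ← Finset.sum_add_distrib]
    refine Finset.sum_congr rfl fun i _ => ?_
    have : F i i = ∑ j, if i = j then F i j else 0 := by simp
    rw [this, ← Finset.sum_add_distrib, ← Finset.sum_add_distrib]
    refine Finset.sum_congr rfl fun j _ => ?_
    rcases lt_trichotomy i j with h | h | h
    · simp [h, h.not_gt, h.ne]
    · simp [h]
    · simp [h, h.not_gt, h.ne']
  have e2 : ∑ i, ∑ j, (if i < j then F i j else if i = j then G i else 0) = T + ∑ i, G i := by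
    rw [hT, ← Finset.sum_add_distrib]
    refine Finset.sum_congr rfl fun i _ => ?_
    have : G i = ∑ j, if i = j then G i else 0 := by simp
    rw [this, ← Finset.sum_add_distrib]
    refine Finset.sum_congr rfl fun j _ => ?_
    rcases lt_trichotomy i j with h | h | h
    · simp [h, h.ne]
    · simp [h]
    · simp [h.not_gt, h.ne']
  rw [e1, e2]; ring

lemma L1 (χ x g : Fin N → ℝ) :
    ∑ e, (∑ a, wv χ x e a * g a) ^ 2 = (∑ i, x i ^ 2) * (∑ i, (χ i * g i) ^ 2)
      + (∑ i, x i * (χ i * g i)) ^ 2 - ∑ i, x i ^ 2 * (χ i * g i) ^ 2 := by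
  obtain ⟨γ, hγ⟩ : ∃ γ : Fin N → ℝ, γ = fun i => χ i * g i := ⟨_, rfl⟩
  have hγ' : ∀ i, χ i * g i = γ i := fun i => by rw [hγ]
  simp_rw [dot_wv, hγ']
  have h := sum_edges (fun i j => (x j * γ i + x i * γ j) ^ 2) (fun i => (x i * γ i) ^ 2)
    (fun i j => by ring)
  simp only [ite_pow, ne_eq, OfNat.ofNat_ne_zero, not_false_eq_true, zero_pow]
  rw [h]
  have e1 : ∑ i, ∑ j, (x j * γ i + x i * γ j) ^ 2
      = ∑ i, ∑ j, γ i ^ 2 * x j ^ 2 + ∑ i, ∑ j, x i ^ 2 * γ j ^ 2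
        + 2 * ∑ i, ∑ j, (x i * γ i) * (x j * γ j) := by
    simp only [Finset.mul_sum, ← Finset.sum_add_distrib]
    exact Finset.sum_congr rfl fun i _ => Finset.sum_congr rfl fun j _ => by ring
  have e2 : ∑ i, (x i * γ i + x i * γ i) ^ 2 = 4 * ∑ i, x i ^ 2 * γ i ^ 2 := by
    rw [Finset.mul_sum]; exact Finset.sum_congr rfl fun i _ => by ring
  have e3 : ∑ i, (x i * γ i) ^ 2 = ∑ i, x i ^ 2 * γ i ^ 2 :=
    Finset.sum_congr rfl fun i _ => by ring
  rw [e1, e2, e3, ← Finset.sum_mul_sum, ← Finset.sum_mul_sum, ← Finset.sum_mul_sum]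
  ring

lemma L2 (χ x g : Fin N → ℝ) :
    ∑ e, sgm χ x e * (∑ a, wv χ x e a * g a) ^ 2 =
      (∑ i, χ i * (χ i * g i) ^ 2) * (∑ i, x i ^ 4)
      + (∑ i, χ i * x i ^ 2) * (∑ i, x i ^ 2 * (χ i * g i) ^ 2)
      + 2 * (∑ i, χ i * x i * (χ i * g i)) * (∑ i, x i ^ 3 * (χ i * g i))
      - 3 * ∑ i, χ i * x i ^ 4 * (χ i * g i) ^ 2 := by
  obtain ⟨γ, hγ⟩ : ∃ γ : Fin N → ℝ, γ = fun i => χ i * g i := ⟨_, rfl⟩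
  have hγ' : ∀ i, χ i * g i = γ i := fun i => by rw [hγ]
  simp_rw [dot_wv, hγ']
  have h := sum_edges
    (fun i j => (χ i * x j ^ 2 + χ j * x i ^ 2) * (x j * γ i + x i * γ j) ^ 2)
    (fun i => (χ i * x i ^ 2) * (x i * γ i) ^ 2)
    (fun i j => by ring)
  have h0 : ∀ e : Fin N × Fin N, sgm χ x e * (if e.1 < e.2 then x e.2 * γ e.1 + x e.1 * γ e.2
      else if e.1 = e.2 then x e.1 * γ e.1 else 0) ^ 2 =
      if e.1 < e.2 then (χ e.1 * x e.2 ^ 2 + χ e.2 * x e.1 ^ 2) * (x e.2 * γ e.1 + x e.1 * γ e.2) ^ 2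
      else if e.1 = e.2 then (χ e.1 * x e.1 ^ 2) * (x e.1 * γ e.1) ^ 2 else 0 := by
    intro e
    unfold sgm
    split_ifs <;> simp
  simp_rw [h0]
  rw [h]
  have e1 : ∑ i, ∑ j, (χ i * x j ^ 2 + χ j * x i ^ 2) * (x j * γ i + x i * γ j) ^ 2
      = ∑ i, ∑ j, (χ i * γ i ^ 2) * x j ^ 4 + ∑ i, ∑ j, x i ^ 4 * (χ j * γ j ^ 2)
        + (∑ i, ∑ j, (χ i * x i ^ 2) * (x j ^ 2 * γ j ^ 2)
          + ∑ i, ∑ j, (x i ^ 2 * γ i ^ 2) * (χ j * x j ^ 2))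
        + 2 * (∑ i, ∑ j, (χ i * x i * γ i) * (x j ^ 3 * γ j)
          + ∑ i, ∑ j, (x i ^ 3 * γ i) * (χ j * x j * γ j)) := by
    simp only [Finset.mul_sum, ← Finset.sum_add_distrib]
    exact Finset.sum_congr rfl fun i _ => Finset.sum_congr rfl fun j _ => by ring
  have e2 : ∑ i, (χ i * x i ^ 2 + χ i * x i ^ 2) * (x i * γ i + x i * γ i) ^ 2
      = 8 * ∑ i, χ i * x i ^ 4 * γ i ^ 2 := by
    rw [Finset.mul_sum]; exact Finset.sum_congr rfl fun i _ => by ring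
  have e3 : ∑ i, (χ i * x i ^ 2) * (x i * γ i) ^ 2 = ∑ i, χ i * x i ^ 4 * γ i ^ 2 :=
    Finset.sum_congr rfl fun i _ => by ring
  rw [e1, e2, e3]
  simp only [← Finset.sum_mul_sum]
  ring

lemma L3 (χ x : Fin N → ℝ) :
    ∑ e, sgm χ x e ^ 2 = (∑ i, χ i ^ 2) * (∑ i, x i ^ 4) + (∑ i, χ i * x i ^ 2) ^ 2
      - ∑ i, χ i ^ 2 * x i ^ 4 := by
  have h := sum_edges (fun i j => (χ i * x j ^ 2 + χ j * x i ^ 2) ^ 2)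
    (fun i => (χ i * x i ^ 2) ^ 2) (fun i j => by ring)
  simp only [sgm, ite_pow, ne_eq, OfNat.ofNat_ne_zero, not_false_eq_true, zero_pow]
  rw [h]
  have e1 : ∑ i, ∑ j, (χ i * x j ^ 2 + χ j * x i ^ 2) ^ 2
      = ∑ i, ∑ j, χ i ^ 2 * x j ^ 4 + ∑ i, ∑ j, x i ^ 4 * χ j ^ 2
        + 2 * ∑ i, ∑ j, (χ i * x i ^ 2) * (χ j * x j ^ 2) := by
    simp only [Finset.mul_sum, ← Finset.sum_add_distrib]
    exact Finset.sum_congr rfl fun i _ => Finset.sum_congr rfl fun j _ => by ring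
  have e2 : ∑ i, (χ i * x i ^ 2 + χ i * x i ^ 2) ^ 2 = 4 * ∑ i, χ i ^ 2 * x i ^ 4 := by
    rw [Finset.mul_sum]; exact Finset.sum_congr rfl fun i _ => by ring
  have e3 : ∑ i, (χ i * x i ^ 2) ^ 2 = ∑ i, χ i ^ 2 * x i ^ 4 :=
    Finset.sum_congr rfl fun i _ => by ring
  rw [e1, e2, e3]
  simp only [← Finset.sum_mul_sum]
  ring

lemma L4 (χ x : Fin N → ℝ) :
    ∑ e, sgm χ x e = (∑ i, χ i) * (∑ i, x i ^ 2) := by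
  have h := sum_edges (fun i j => (χ i * x j ^ 2 + χ j * x i ^ 2))
    (fun i => (χ i * x i ^ 2)) (fun i j => by ring)
  simp only [sgm]
  rw [h]
  have e1 : ∑ i, ∑ j, (χ i * x j ^ 2 + χ j * x i ^ 2)
      = ∑ i, ∑ j, χ i * x j ^ 2 + ∑ i, ∑ j, x i ^ 2 * χ j := by
    simp only [← Finset.sum_add_distrib]
    exact Finset.sum_congr rfl fun i _ => Finset.sum_congr rfl fun j _ => by ring
  have e2 : ∑ i, (χ i * x i ^ 2 + χ i * x i ^ 2) = 2 * ∑ i, χ i * x i ^ 2 := by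
    rw [Finset.mul_sum]; exact Finset.sum_congr rfl fun i _ => by ring
  rw [e1, e2]
  simp only [← Finset.sum_mul_sum]
  ring

def Yv (χ x : Fin N → ℝ) (r : Fin N × Fin N → Bool) (a : Fin N) : ℝ :=
  ∑ e, rad (r e) * wv χ x e a

lemma Yv_eq (χ x : Fin N → ℝ) (r : Fin N × Fin N → Bool) (a : Fin N) :
    Yv χ x r a = χ a * ∑ k, rsym (fun i j => r (i, j)) a k * x k := by
  unfold Yv
  rw [Fintype.sum_prod_type]
  have h : ∀ i j, rad (r (i, j)) * wv χ x (i, j) a =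
      (if i = a then (if a ≤ j then χ a * (rad (r (a, j)) * x j) else 0) else 0)
      + (if j = a then (if i < a then χ a * (rad (r (i, a)) * x i) else 0) else 0) := by
    intro i j
    unfold wv
    by_cases h1 : i = a
    · subst h1
      rcases lt_trichotomy i j with h | h | h
      · simp [h, h.le, h.ne, h.ne']; ring
      · subst h; simp; ring
      · simp [h, h.not_ge, h.not_gt, h.ne, h.ne']
    · by_cases h2 : j = a
      · subst h2
        rcases lt_trichotomy i j with h | h | h
        · simp [h, h.ne, h.ne']; ring
        · exact absurd h h1
        · simp [h.not_gt, h.ne, h.ne']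
      · simp [h1, h2, Ne.symm h1, Ne.symm h2]
  simp_rw [h, Finset.sum_add_distrib]
  rw [Finset.sum_comm]
  simp only [Finset.sum_ite_eq', Finset.mem_univ, if_true]
  rw [← Finset.sum_add_distrib, Finset.mul_sum]
  refine Finset.sum_congr rfl fun k _ => ?_
  unfold rsym
  rcases lt_or_ge k a with h | h
  · simp [h, h.not_ge]
  · simp [h, h.not_gt]

lemma Yv_fl (χ x : Fin N → ℝ) (r : Fin N × Fin N → Bool) (e : Fin N × Fin N) (a : Fin N) :
    Yv χ x (fl e r) a = Yv χ x r a - 2 * rad (r e) * wv χ x e a := by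
  unfold Yv
  have : ∀ f, rad (fl e r f) * wv χ x f a = rad (r f) * wv χ x f a -
      if f = e then 2 * rad (r e) * wv χ x e a else 0 := by
    intro f
    by_cases h : f = e
    · subst h; simp [fl, rad_not]; ring
    · simp [fl, h]
  simp_rw [this, Finset.sum_sub_distrib]
  simp

end alg

section low
variable {N : ℕ}

set_option maxHeartbeats 2000000 in
lemma lower_app (χ x : Fin N → ℝ) (hχ : ∀ i, χ i = 0 ∨ χ i = 1) (hx : ∑ i, x i ^ 2 = 1)
    (h : ℝ) (h0 : 0 ≤ h) (h8 : h ≤ 1 / 8) :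
    ∑ r, Real.exp (-h * ∑ a, Yv χ x r a ^ 2) ≤ Fintype.card (Fin N × Fin N → Bool) *
      Real.exp (8 * h - (∑ i, χ i + 6) / 2 * Real.log (1 + 2 * h)) := by
  have hχ2 : ∀ i, χ i * χ i = χ i := fun i => by rcases hχ i with h | h <;> simp [h]
  have hχ0 : ∀ i, 0 ≤ χ i := fun i => by rcases hχ i with h | h <;> simp [h]
  have hχ1 : ∀ i, χ i ≤ 1 := fun i => by rcases hχ i with h | h <;> simp [h]
  obtain ⟨y, hy⟩ : ∃ y : Fin N → ℝ, ∀ a, y a = χ a * x a := ⟨fun a => χ a * x a, fun _ => rfl⟩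
  obtain ⟨Q, hQ⟩ : ∃ Q : (Fin N × Fin N → Bool) → ℝ, ∀ r, Q r = ∑ a, y a * Yv χ x r a :=
    ⟨_, fun _ => rfl⟩
  obtain ⟨q, hq⟩ : ∃ q : (Fin N × Fin N) → ℝ, ∀ e, q e = ∑ a, wv χ x e a * y a :=
    ⟨_, fun _ => rfl⟩
  obtain ⟨Z, hZ⟩ : ∃ Z : (Fin N × Fin N → Bool) → Fin N → ℝ,
    ∀ r a, Z r a = Yv χ x r a - y a * Q r := ⟨fun r a => Yv χ x r a - y a * Q r, fun _ _ => rfl⟩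
  obtain ⟨c, hc⟩ : ∃ c : (Fin N × Fin N → Bool) → Fin N × Fin N → ℝ,
    ∀ r e, c r e = ∑ a, wv χ x e a * Z r a := ⟨fun r e => ∑ a, wv χ x e a * Z r a, fun _ _ => rfl⟩
  obtain ⟨S, hS⟩ : ∃ S : (Fin N × Fin N → Bool) → ℝ,
    ∀ r, S r = ∑ a, Yv χ x r a ^ 2 - Q r ^ 2 := ⟨_, fun _ => rfl⟩
  obtain ⟨s, hs⟩ : ∃ s : Fin N × Fin N → ℝ, ∀ e, s e = sgm χ x e - q e ^ 2 := ⟨_, fun _ => rfl⟩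
  obtain ⟨ρ, hρ⟩ : ∃ ρ, ρ = ∑ i, χ i * x i ^ 2 := ⟨_, rfl⟩
  obtain ⟨δ, hδ⟩ : ∃ δ, δ = ∑ i, x i ^ 4 := ⟨_, rfl⟩
  have hχY : ∀ r a, χ a * Yv χ x r a = Yv χ x r a := fun r a => by
    rw [Yv_eq, ← mul_assoc, hχ2]
  have hχy : ∀ a, χ a * y a = y a := fun a => by rw [hy, ← mul_assoc, hχ2]
  have hχZ : ∀ r a, χ a * Z r a = Z r a := fun r a => by
    rw [hZ, mul_sub, hχY, ← mul_assoc, hχy]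
  have hx1 : ∀ i, x i ^ 2 ≤ 1 := fun i => by
    rw [← hx]; exact Finset.single_le_sum (f := fun i => x i ^ 2) (fun i _ => sq_nonneg _) (Finset.mem_univ i)
  have hρ0 : 0 ≤ ρ := by rw [hρ]; exact Finset.sum_nonneg fun i _ => mul_nonneg (hχ0 i) (sq_nonneg _)
  have hρ1 : ρ ≤ 1 := by
    rw [hρ, ← hx]; exact Finset.sum_le_sum fun i _ => by nlinarith [hχ1 i, sq_nonneg (x i)]
  have hδ0 : 0 ≤ δ := by rw [hδ]; exact Finset.sum_nonneg fun i _ => by positivity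
  have hδ1 : δ ≤ 1 := by
    rw [hδ, ← hx]; exact Finset.sum_le_sum fun i _ => by nlinarith [hx1 i, sq_nonneg (x i)]
  have hxy : ∑ a, x a * y a = ρ := by
    rw [hρ]; exact Finset.sum_congr rfl fun i _ => by rw [hy]; ring
  have hyy : ∑ a, y a ^ 2 = ρ := by
    rw [hρ]; refine Finset.sum_congr rfl fun i _ => ?_
    rw [hy]; linear_combination x i ^ 2 * hχ2 i
  have hxY : ∀ r, ∑ a, x a * Yv χ x r a = Q r := fun r => by
    rw [hQ]; refine Finset.sum_congr rfl fun i _ => ?_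
    rw [hy]; linear_combination -x i * hχY r i
  have hwχ : ∀ e, ∑ a, wv χ x e a ^ 2 = sgm χ x e := wv_sq χ x hχ2
  have hcq : ∀ r e, c r e = ∑ a, wv χ x e a * Yv χ x r a - q e * Q r := fun r e => by
    rw [hc, hq, Finset.sum_mul, ← Finset.sum_sub_distrib]
    exact Finset.sum_congr rfl fun i _ => by rw [hZ]; ring
  have hQfl : ∀ e r, Q (fl e r) = Q r - 2 * rad (r e) * q e := fun e r => by
    rw [hQ, hQ, hq, Finset.mul_sum, ← Finset.sum_sub_distrib]
    exact Finset.sum_congr rfl fun i _ => by rw [Yv_fl]; ring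
  have hsg0 : ∀ e, 0 ≤ sgm χ x e := fun e => by
    rw [← hwχ]; exact Finset.sum_nonneg fun _ _ => sq_nonneg _
  have hqs : ∀ e, q e ^ 2 ≤ sgm χ x e := fun e => by
    have := Finset.sum_mul_sq_le_sq_mul_sq Finset.univ (wv χ x e) y
    rw [← hq, hwχ, hyy] at this
    nlinarith [hsg0 e]
  have hsg1 : ∀ e, sgm χ x e ≤ 1 := fun e => by
    obtain ⟨i, j⟩ := e
    unfold sgm
    split_ifs with h1 h2
    · have : x i ^ 2 + x j ^ 2 ≤ 1 := by
        rw [← hx, ← Finset.sum_pair (f := fun k => x k ^ 2) (show i ≠ j from h1.ne)]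
        exact Finset.sum_le_sum_of_subset_of_nonneg (Finset.subset_univ _) fun _ _ _ => sq_nonneg _
      dsimp only
      nlinarith [hχ1 i, hχ1 j, sq_nonneg (x i), sq_nonneg (x j)]
    · dsimp only
      nlinarith [hχ1 i, hx1 i, sq_nonneg (x i)]
    · norm_num
  have hs0 : ∀ e, 0 ≤ s e := fun e => by rw [hs]; linarith [hqs e]
  have hss : ∀ e, s e ≤ sgm χ x e := fun e => by rw [hs]; nlinarith [sq_nonneg (q e)]
  have hs1 : ∀ e, s e ≤ 1 := fun e => (hss e).trans (hsg1 e)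
  have hx4 : ∑ i, χ i * x i ^ 4 ≤ δ := by
    rw [hδ]; exact Finset.sum_le_sum fun i _ => by
      nlinarith [hχ1 i, show 0 ≤ x i ^ 4 by positivity]
  have hx40 : 0 ≤ ∑ i, χ i * x i ^ 4 := Finset.sum_nonneg fun i _ =>
    mul_nonneg (hχ0 i) (by positivity)
  have hsum : ∑ e, sgm χ x e = ∑ i, χ i := by rw [L4, hx, mul_one]
  have hqq : ∑ e, q e ^ 2 ≤ 2 := by
    have := L1 χ x y
    simp_rw [hχy, ← hq] at this
    rw [this, hx, hyy, hxy]
    have : 0 ≤ ∑ i, x i ^ 2 * y i ^ 2 := Finset.sum_nonneg fun i _ => by positivity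
    nlinarith
  have hA : ∑ i, χ i - 2 ≤ ∑ e, s e := by
    simp_rw [hs, Finset.sum_sub_distrib]; rw [hsum]; linarith
  have key := lower_mgf S c s ?_ ?_ ?_ hs0 hs1 δ 8 hδ0 ?_ ?_ h h0 h8
  · calc _ ≤ ∑ r, Real.exp (-h * S r) := by
          refine Finset.sum_le_sum fun r _ => Real.exp_le_exp.2 ?_
          rw [hS]; nlinarith [mul_nonneg h0 (sq_nonneg (Q r))]
      _ ≤ _ := key
      _ ≤ _ := by
          refine mul_le_mul_of_nonneg_left (Real.exp_le_exp.2 ?_) (by positivity)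
          have : 0 ≤ Real.log (1 + 2 * h) := Real.log_nonneg (by linarith)
          nlinarith
  · intro r
    have e1 : ∀ e, rad (r e) * c r e = ∑ a, rad (r e) * wv χ x e a * Z r a := fun e => by
      rw [hc, Finset.mul_sum]; exact Finset.sum_congr rfl fun _ _ => by ring
    simp_rw [e1]
    rw [Finset.sum_comm]
    simp_rw [← Finset.sum_mul]
    change _ = ∑ a, Yv χ x r a * Z r a
    rw [hS, pow_two (Q r)]
    nth_rewrite 1 [hQ]
    rw [Finset.sum_mul, ← Finset.sum_sub_distrib]
    exact Finset.sum_congr rfl fun _ _ => by rw [hZ]; ring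
  · intro e r
    rw [hcq, hcq, hQfl, hs, ← hwχ]
    have : ∑ a, wv χ x e a * Yv χ x (fl e r) a = ∑ a, wv χ x e a * Yv χ x r a
        - 2 * rad (r e) * ∑ a, wv χ x e a ^ 2 := by
      rw [Finset.mul_sum, ← Finset.sum_sub_distrib]
      exact Finset.sum_congr rfl fun _ _ => by rw [Yv_fl]; ring
    rw [this]; ring
  · intro e r
    rw [hcq, hS, hS, hQfl, hs, ← hwχ]
    have : ∑ a, Yv χ x (fl e r) a ^ 2 = ∑ a, Yv χ x r a ^ 2
        - 4 * rad (r e) * ∑ a, wv χ x e a * Yv χ x r a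
        + 4 * ∑ a, wv χ x e a ^ 2 := by
      simp only [Finset.mul_sum]
      rw [← Finset.sum_sub_distrib, ← Finset.sum_add_distrib]
      exact Finset.sum_congr rfl fun a _ => by
        rw [Yv_fl]; linear_combination 4 * wv χ x e a ^ 2 * rad_sq (r e)
    rw [this]; linear_combination -4 * q e ^ 2 * rad_sq (r e)
  · intro r
    have l1 := L1 χ x (Z r)
    have l2 := L2 χ x (Z r)
    simp_rw [hχZ, ← hc] at l1 l2
    rw [hx] at l1
    have a1 : ∑ i, χ i * Z r i ^ 2 = ∑ i, Z r i ^ 2 :=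
      Finset.sum_congr rfl fun i _ => by linear_combination Z r i * hχZ r i
    have a2 : ∑ i, χ i * x i * Z r i = ∑ i, x i * Z r i :=
      Finset.sum_congr rfl fun i _ => by linear_combination x i * hχZ r i
    have a3 : ∑ i, χ i * x i ^ 4 * Z r i ^ 2 = ∑ i, x i ^ 4 * Z r i ^ 2 :=
      Finset.sum_congr rfl fun i _ => by linear_combination x i ^ 4 * Z r i * hχZ r i
    rw [a1, a2, a3, ← hρ, ← hδ] at l2
    have a4 : ∑ i, Z r i ^ 2 = S r - (1 - ρ) * Q r ^ 2 := by
      have : ∑ i, Z r i ^ 2 = ∑ i, Yv χ x r i ^ 2 - 2 * Q r * ∑ a, y a * Yv χ x r a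
        + Q r ^ 2 * ∑ a, y a ^ 2 := by
        simp only [Finset.mul_sum]
        rw [← Finset.sum_sub_distrib, ← Finset.sum_add_distrib]
        exact Finset.sum_congr rfl fun a _ => by rw [hZ]; ring
      rw [this, ← hQ, hyy, hS]; ring
    have a5 : ∑ i, x i * Z r i = (1 - ρ) * Q r := by
      have : ∑ i, x i * Z r i = ∑ a, x a * Yv χ x r a - (∑ a, x a * y a) * Q r := by
        rw [Finset.sum_mul, ← Finset.sum_sub_distrib]
        exact Finset.sum_congr rfl fun a _ => by rw [hZ]; ring
      rw [this, hxY, hxy]; ring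
    have a6 : 2 * (∑ i, x i * Z r i) * (∑ i, x i ^ 3 * Z r i) ≤
        ρ * (∑ i, x i * Z r i) ^ 2 + ∑ i, x i ^ 4 * Z r i ^ 2 := by
      obtain ⟨X, hX⟩ : ∃ X, X = ∑ i, x i * Z r i := ⟨_, rfl⟩
      rw [← hX, Finset.mul_sum, hρ, Finset.sum_mul, ← Finset.sum_add_distrib]
      refine Finset.sum_le_sum fun i _ => ?_
      have h1 := sq_nonneg (X * (χ i * x i) - x i ^ 2 * Z r i)
      have h2 : (X * (χ i * x i) - x i ^ 2 * Z r i) ^ 2 =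
        X ^ 2 * (χ i * x i ^ 2) - 2 * X * (x i ^ 3 * Z r i) + x i ^ 4 * Z r i ^ 2 := by
        linear_combination X ^ 2 * x i ^ 2 * hχ2 i - 2 * X * x i ^ 3 * hχZ r i
      linarith
    have b1 : 0 ≤ ∑ i, x i ^ 2 * Z r i ^ 2 := Finset.sum_nonneg fun i _ => by positivity
    have b2 : 0 ≤ ∑ i, x i ^ 4 * Z r i ^ 2 := Finset.sum_nonneg fun i _ => by positivity
    have b3 : ∑ e, (1 + s e) * c r e ^ 2 ≤ ∑ e, c r e ^ 2 + ∑ e, sgm χ x e * c r e ^ 2 := by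
      rw [← Finset.sum_add_distrib]
      exact Finset.sum_le_sum fun e _ => by nlinarith [hss e, sq_nonneg (c r e)]
    refine b3.trans ?_
    rw [l1, l2]
    rw [a5] at a6 ⊢
    rw [a4]
    have b4 : (1 - ρ) * ∑ i, x i ^ 2 * Z r i ^ 2 ≥ 0 := mul_nonneg (by linarith) b1
    have b5 : 0 ≤ ((1 + δ) * (1 - ρ) - (1 + ρ) * (1 - ρ) ^ 2) * Q r ^ 2 := by
      refine mul_nonneg ?_ (sq_nonneg _)
      have : (1 + δ) * (1 - ρ) - (1 + ρ) * (1 - ρ) ^ 2 = (1 - ρ) * (δ + ρ ^ 2) := by ring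
      rw [this]; exact mul_nonneg (by linarith) (by positivity)
    nlinarith
  · have l2 := L2 χ x y
    simp_rw [hχy, ← hq] at l2
    have a1 : ∑ i, χ i * y i ^ 2 = ρ := by
      rw [← hyy]
      exact Finset.sum_congr rfl fun i _ => by linear_combination y i * hχy i
    have a2 : ∑ i, χ i * x i * y i = ρ := by
      rw [← hxy]
      exact Finset.sum_congr rfl fun i _ => by linear_combination x i * hχy i
    have a3 : ∑ i, x i ^ 3 * y i = ∑ i, χ i * x i ^ 4 :=
      Finset.sum_congr rfl fun i _ => by rw [hy]; ring
    have a4 : ∑ i, x i ^ 2 * y i ^ 2 = ∑ i, χ i * x i ^ 4 :=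
      Finset.sum_congr rfl fun i _ => by rw [hy]; linear_combination x i ^ 4 * hχ2 i
    have a5 : 0 ≤ ∑ i, χ i * x i ^ 4 * y i ^ 2 := Finset.sum_nonneg fun i _ =>
      mul_nonneg (mul_nonneg (hχ0 i) (by positivity)) (sq_nonneg _)
    rw [a1, a2, a3, a4, ← hρ, ← hδ] at l2
    have l3 := L3 χ x
    have a6 : ∑ i, χ i ^ 2 = ∑ i, χ i := Finset.sum_congr rfl fun i _ => by rw [pow_two, hχ2]
    have a7 : ∑ i, χ i ^ 2 * x i ^ 4 ≤ ρ ^ 2 := by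
      have : ∀ i, χ i ^ 2 * x i ^ 4 = (χ i * x i ^ 2) ^ 2 := fun i => by ring
      simp_rw [this]; rw [hρ]
      exact Finset.sum_sq_le_sq_sum_of_nonneg fun i _ => mul_nonneg (hχ0 i) (sq_nonneg _)
    rw [a6, ← hδ, ← hρ] at l3
    have a8 : ∑ e, sgm χ x e ^ 2 - 2 * ∑ e, sgm χ x e * q e ^ 2 ≤ ∑ e, s e ^ 2 := by
      rw [Finset.mul_sum, ← Finset.sum_sub_distrib]
      exact Finset.sum_le_sum fun e _ => by rw [hs]; nlinarith [sq_nonneg (q e ^ 2)]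
    have a9 : ∑ e, s e ≤ ∑ i, χ i := by
      rw [← hsum]; exact Finset.sum_le_sum fun e _ => hss e
    have a10 : ∑ e, sgm χ x e * q e ^ 2 ≤ 4 := by
      rw [l2]
      have := mul_le_mul hρ1 hδ1 hδ0 zero_le_one
      have := mul_le_mul hρ1 (hx4.trans hδ1) hx40 zero_le_one
      nlinarith
    have a11 := mul_le_mul_of_nonneg_left a9 hδ0
    nlinarith

end low

section up
open ProbabilityTheory

def γ1 : Measure ℝ := gaussianReal 0 1

instance : IsProbabilityMeasure γ1 := by unfold γ1; infer_instance

lemma GLem (α β : ℝ) (hα : α < 1 / 2) :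
    ∫⁻ g, ENNReal.ofReal (Real.exp (α * g ^ 2 + β * g)) ∂γ1 =
      ENNReal.ofReal (Real.exp (-(1 / 2) * Real.log (1 - 2 * α) + β ^ 2 / (2 * (1 - 2 * α)))) := by
  have h0 : 0 < 1 - 2 * α := by linarith
  have hv0 : 0 < (1 - 2 * α)⁻¹ := inv_pos.2 h0
  obtain ⟨v, hv⟩ : ∃ v : NNReal, (v : ℝ) = (1 - 2 * α)⁻¹ := ⟨⟨_, hv0.le⟩, rfl⟩
  have hvne : v ≠ 0 := by
    intro h; rw [h] at hv; simp at hv; linarith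
  unfold γ1
  rw [gaussianReal_of_var_ne_zero _ one_ne_zero,
    lintegral_withDensity_eq_lintegral_mul _ (measurable_gaussianPDF _ _) (by fun_prop)]
  have key : ∀ g, (gaussianPDF 0 1 * fun g => ENNReal.ofReal (Real.exp (α * g ^ 2 + β * g))) g =
      ENNReal.ofReal (Real.exp (-(1 / 2) * Real.log (1 - 2 * α) + β ^ 2 / (2 * (1 - 2 * α))))
        * gaussianPDF (β * v) v g := by
    intro g
    simp only [Pi.mul_apply, gaussianPDF]
    rw [← ENNReal.ofReal_mul (gaussianPDFReal_nonneg _ _ _), ← ENNReal.ofReal_mul (Real.exp_pos _).le]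
    congr 1
    simp only [gaussianPDFReal]
    have hsq : (√(2 * Real.pi * v))⁻¹ = (√(2 * Real.pi))⁻¹ * Real.exp (1 / 2 * Real.log (1 - 2 * α)) := by
      rw [hv, Real.sqrt_mul (by positivity), mul_inv, Real.sqrt_inv, inv_inv]
      congr 1
      rw [Real.sqrt_eq_rpow, Real.rpow_def_of_pos h0]; congr 1; ring
    rw [hsq]
    simp only [NNReal.coe_one, mul_one, sub_zero]
    rw [show ∀ a b c d : ℝ, a * (b * c * d) = b * (a * c * d) from fun a b c d => by ring, mul_assoc,
      ← Real.exp_add, ← Real.exp_add, ← Real.exp_add]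
    congr 2
    rw [hv]
    field_simp
    ring
  simp_rw [key]
  rw [lintegral_const_mul _ (measurable_gaussianPDF _ _), lintegral_gaussianPDF_eq_one _ hvne, mul_one]

variable {N : ℕ}

lemma GPem (α β : Fin N → ℝ) (hα : ∀ i, α i < 1 / 2) :
    ∫⁻ g : Fin N → ℝ, ENNReal.ofReal (Real.exp (∑ i, (α i * g i ^ 2 + β i * g i)))
        ∂(Measure.pi fun _ => γ1) =
      ENNReal.ofReal (Real.exp (∑ i, (-(1 / 2) * Real.log (1 - 2 * α i)
        + β i ^ 2 / (2 * (1 - 2 * α i))))) := by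
  simp_rw [Real.exp_sum]
  rw [ENNReal.ofReal_prod_of_nonneg (fun _ _ => (Real.exp_pos _).le)]
  have : ∀ g : Fin N → ℝ, ENNReal.ofReal (∏ i, Real.exp (α i * g i ^ 2 + β i * g i)) =
    ∏ i, ENNReal.ofReal (Real.exp (α i * g i ^ 2 + β i * g i)) := fun g =>
      ENNReal.ofReal_prod_of_nonneg (fun _ _ => (Real.exp_pos _).le)
  simp_rw [this]
  have hm : ∀ i, Measurable fun t : ℝ => ENNReal.ofReal (Real.exp (α i * t ^ 2 + β i * t)) :=
    fun i => by fun_prop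
  rw [lintegral_prod_eq_prod_lintegral_of_indepFun Finset.univ
    (fun i (g : Fin N → ℝ) => ENNReal.ofReal (Real.exp (α i * g i ^ 2 + β i * g i)))
    (iIndepFun_pi (μ := fun _ : Fin N => γ1)
      (X := fun i (t : ℝ) => ENNReal.ofReal (Real.exp (α i * t ^ 2 + β i * t)))
      (fun i => (hm i).aemeasurable)) (fun i => by fun_prop)]
  refine Finset.prod_congr rfl fun i _ => ?_
  rw [← GLem _ _ (hα i)]
  exact (measurePreserving_eval (fun _ : Fin N => γ1) i).lintegral_comp (hm i)

lemma sum_exp_rad {E : Type*} [Fintype E] [DecidableEq E] (b : E → ℝ) :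
    ∑ r : E → Bool, Real.exp (∑ e, rad (r e) * b e) ≤
      Fintype.card (E → Bool) * Real.exp (∑ e, b e ^ 2 / 2) := by
  simp_rw [Real.exp_sum]
  have h := (Finset.prod_univ_sum (fun _ : E => (Finset.univ : Finset Bool))
    (fun e t => Real.exp (rad t * b e)))
  rw [Fintype.piFinset_univ] at h
  rw [← h]
  have : (Fintype.card (E → Bool) : ℝ) = ∏ e : E, (2 : ℝ) := by simp
  rw [this, ← Finset.prod_mul_distrib]
  refine Finset.prod_le_prod (fun _ _ => by positivity) fun e _ => ?_
  have := Real.cosh_le_exp_half_sq (b e)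
  rw [Real.cosh_eq] at this
  simp only [Fintype.sum_bool, rad]
  simp
  linarith

lemma upper_app (χ x : Fin N → ℝ) (hχ : ∀ i, χ i = 0 ∨ χ i = 1) (hx : ∑ i, x i ^ 2 = 1)
    (h τ : ℝ) (h0 : 0 < h) (h4 : h < 1 / 4) (hτ : τ = 2 * h / (1 - 2 * h)) :
    ∑ r, Real.exp (h * ∑ a, Yv χ x r a ^ 2) ≤ Fintype.card (Fin N × Fin N → Bool) *
      Real.exp (-(∑ i, χ i) / 2 * Real.log (1 - 2 * h) + 1 / 2 * (-τ - Real.log (1 - τ))) := by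
  have hχ2 : ∀ i, χ i * χ i = χ i := fun i => by rcases hχ i with h | h <;> simp [h]
  have hχ0 : ∀ i, 0 ≤ χ i := fun i => by rcases hχ i with h | h <;> simp [h]
  have hχ1 : ∀ i, χ i ≤ 1 := fun i => by rcases hχ i with h | h <;> simp [h]
  have hx1 : ∀ i, x i ^ 2 ≤ 1 := fun i => by
    rw [← hx]; exact Finset.single_le_sum (f := fun i => x i ^ 2) (fun i _ => sq_nonneg _) (Finset.mem_univ i)
  obtain ⟨k, hk0, hk⟩ : ∃ k : ℝ, 0 ≤ k ∧ k ^ 2 = 2 * h :=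
    ⟨√(2 * h), Real.sqrt_nonneg _, Real.sq_sqrt (by linarith)⟩
  obtain ⟨α, hα⟩ : ∃ α : Fin N → ℝ, ∀ i, α i = h * χ i * (1 - x i ^ 2) := ⟨_, fun _ => rfl⟩
  have hαh : ∀ i, α i ≤ h := fun i => by
    rw [hα]
    have : χ i * (1 - x i ^ 2) ≤ 1 := by nlinarith [hχ0 i, hχ1 i, hx1 i, sq_nonneg (x i)]
    nlinarith
  have hα2 : ∀ i, α i < 1 / 2 := fun i => by linarith [hαh i]
  have hd : ∀ i, 0 < 1 - 2 * α i := fun i => by linarith [hα2 i]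
  obtain ⟨q, hq⟩ : ∃ q, q = ∑ i, 2 * h * χ i * x i ^ 2 / (1 - 2 * α i) := ⟨_, rfl⟩
  have h2 : 0 < 1 - 2 * h := by linarith
  have hτ0 : 0 < τ := by rw [hτ]; positivity
  have hτ1 : τ < 1 := by rw [hτ, div_lt_one h2]; linarith
  have hqτ : q ≤ τ := by
    have : τ = ∑ i, τ * x i ^ 2 := by rw [← Finset.mul_sum, hx, mul_one]
    rw [this, hq]
    refine Finset.sum_le_sum fun i _ => ?_
    rw [hτ, div_mul_eq_mul_div]
    have : 2 * h * χ i * x i ^ 2 ≤ 2 * h * x i ^ 2 := by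
      nlinarith [hχ1 i, mul_nonneg h0.le (sq_nonneg (x i))]
    exact div_le_div₀ (by positivity) this h2 (by linarith [hαh i])
  have hq0 : 0 ≤ q := by
    rw [hq]; exact Finset.sum_nonneg fun i _ => div_nonneg
      (mul_nonneg (mul_nonneg (by linarith) (hχ0 i)) (sq_nonneg _)) (hd i).le
  set c : ℝ := (Fintype.card (Fin N × Fin N → Bool) : ℝ) with hc
  have hc0 : 0 ≤ c := by rw [hc]; positivity
  have A1 : ∀ r, ENNReal.ofReal (Real.exp (h * ∑ a, Yv χ x r a ^ 2)) =
      ∫⁻ g : Fin N → ℝ, ENNReal.ofReal (Real.exp (∑ e, rad (r e) * (k * ∑ a, wv χ x e a * g a)))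
        ∂(Measure.pi fun _ => γ1) := by
    intro r
    have := GPem (fun _ => 0) (fun i => k * Yv χ x r i) (fun _ => by norm_num)
    convert! this.symm using 3
    · congr 1
      simp only [mul_zero, sub_zero, Real.log_one, zero_add, mul_one]
      rw [Finset.mul_sum]
      exact Finset.sum_congr rfl fun i _ => by rw [mul_pow, hk]; ring
    · rename_i g
      congr 2
      simp only [Yv, zero_mul, zero_add, Finset.mul_sum, Finset.sum_mul]
      rw [Finset.sum_comm]
      exact Finset.sum_congr rfl fun i _ => Finset.sum_congr rfl fun e _ => by ring
  have A2 : ∀ g : Fin N → ℝ, ENNReal.ofReal (∑ r : Fin N × Fin N → Bool,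
        Real.exp (∑ e, rad (r e) * (k * ∑ a, wv χ x e a * g a)))
      ≤ ENNReal.ofReal c * ∫⁻ ξ, ENNReal.ofReal (Real.exp (∑ i, (α i * g i ^ 2 +
        (k * χ i * x i * ξ) * g i))) ∂γ1 := by
    intro g
    have hg : ∀ ξ : ℝ, Real.exp (∑ i, (α i * g i ^ 2 + (k * χ i * x i * ξ) * g i)) =
        Real.exp (∑ i, α i * g i ^ 2) * Real.exp (0 * ξ ^ 2 + (k * ∑ i, x i * (χ i * g i)) * ξ) := by
      intro ξ
      rw [← Real.exp_add]; congr 1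
      rw [Finset.sum_add_distrib, zero_mul, zero_add, Finset.mul_sum, Finset.sum_mul]
      congr 1
      exact Finset.sum_congr rfl fun i _ => by ring
    simp_rw [hg, ENNReal.ofReal_mul (Real.exp_pos _).le]
    rw [lintegral_const_mul _ (by fun_prop), GLem _ _ (by norm_num),
      ← ENNReal.ofReal_mul (Real.exp_pos _).le, ← ENNReal.ofReal_mul hc0]
    refine ENNReal.ofReal_le_ofReal ((sum_exp_rad _).trans ?_)
    rw [← hc, ← Real.exp_add]
    refine mul_le_mul_of_nonneg_left (Real.exp_le_exp.2 (le_of_eq ?_)) hc0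
    have l1 := L1 χ x g
    rw [hx] at l1
    have : ∑ e, (k * ∑ a, wv χ x e a * g a) ^ 2 / 2 = h * ∑ e, (∑ a, wv χ x e a * g a) ^ 2 := by
      rw [Finset.mul_sum]; exact Finset.sum_congr rfl fun e _ => by rw [mul_pow, hk]; ring
    rw [this, l1]
    have : ∑ i, α i * g i ^ 2 = h * (∑ i, (χ i * g i) ^ 2 - ∑ i, x i ^ 2 * (χ i * g i) ^ 2) := by
      rw [← Finset.sum_sub_distrib, Finset.mul_sum]
      refine Finset.sum_congr rfl fun i _ => ?_
      rw [hα]; linear_combination -h * (1 - x i ^ 2) * g i ^ 2 * hχ2 i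
    rw [this, mul_pow, hk]
    simp; ring
  have A3 : ENNReal.ofReal (∑ r, Real.exp (h * ∑ a, Yv χ x r a ^ 2)) ≤
      ENNReal.ofReal c * ∫⁻ ξ, ∫⁻ g : Fin N → ℝ, ENNReal.ofReal (Real.exp (∑ i, (α i * g i ^ 2 +
        (k * χ i * x i * ξ) * g i))) ∂(Measure.pi fun _ => γ1) ∂γ1 := by
    rw [ENNReal.ofReal_sum_of_nonneg fun _ _ => (Real.exp_pos _).le]
    simp_rw [A1]
    rw [← lintegral_finsetSum _ (fun r _ => by fun_prop)]
    rw [lintegral_lintegral_swap (by fun_prop), ← lintegral_const_mul' _ _ ENNReal.ofReal_ne_top]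
    refine lintegral_mono fun g => ?_
    refine le_trans (le_of_eq ?_) (A2 g)
    rw [ENNReal.ofReal_sum_of_nonneg fun _ _ => (Real.exp_pos _).le]
  simp_rw [GPem _ _ hα2] at A3
  have A4 : ∀ ξ : ℝ, Real.exp (∑ i, (-(1 / 2) * Real.log (1 - 2 * α i)
        + (k * χ i * x i * ξ) ^ 2 / (2 * (1 - 2 * α i)))) =
      Real.exp (∑ i, (-(1 / 2) * Real.log (1 - 2 * α i))) * Real.exp (q / 2 * ξ ^ 2 + 0 * ξ) := by
    intro ξ
    rw [← Real.exp_add, Finset.sum_add_distrib, zero_mul, add_zero, hq, Finset.sum_div,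
      Finset.sum_mul]
    congr 2
    refine Finset.sum_congr rfl fun i _ => ?_
    have e0 : (k * χ i * x i * ξ) ^ 2 = 2 * h * χ i * x i ^ 2 * ξ ^ 2 := by
      linear_combination χ i ^ 2 * x i ^ 2 * ξ ^ 2 * hk + 2 * h * x i ^ 2 * ξ ^ 2 * hχ2 i
    rw [e0]
    have := (hd i).ne'
    field_simp
  simp_rw [A4, ENNReal.ofReal_mul (Real.exp_pos _).le] at A3
  rw [lintegral_const_mul _ (by fun_prop), GLem _ _ (by linarith),
    ← ENNReal.ofReal_mul (Real.exp_pos _).le, ← ENNReal.ofReal_mul hc0,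
    ENNReal.ofReal_le_ofReal_iff (by positivity), ← Real.exp_add] at A3
  refine A3.trans (mul_le_mul_of_nonneg_left (Real.exp_le_exp.2 ?_) hc0)
  have B1 : ∑ i, (-(1 / 2) * Real.log (1 - 2 * α i)) ≤
      -(∑ i, χ i) / 2 * Real.log (1 - 2 * h) - 1 / 2 * q := by
    rw [hq, Finset.mul_sum, neg_div, Finset.sum_div, neg_mul, Finset.sum_mul, ← Finset.sum_neg_distrib,
      ← Finset.sum_sub_distrib]
    refine Finset.sum_le_sum fun i _ => ?_
    rcases hχ i with hi | hi
    · simp [hα, hi]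
    · have e1 : 1 - 2 * α i = 1 - 2 * h + 2 * h * x i ^ 2 := by rw [hα, hi]; ring
      have hpos : 0 < 1 - 2 * h + 2 * h * x i ^ 2 := by positivity
      have := Real.log_le_sub_one_of_pos (div_pos h2 hpos)
      rw [Real.log_div h2.ne' hpos.ne'] at this
      have e2 : (1 - 2 * h) / (1 - 2 * h + 2 * h * x i ^ 2) - 1 =
        - (2 * h * x i ^ 2 / (1 - 2 * h + 2 * h * x i ^ 2)) := by field_simp; ring
      rw [e2] at this
      rw [e1, hi]
      simp only [mul_one]
      linarith
  have B2 : -q - Real.log (1 - q) ≤ -τ - Real.log (1 - τ) := by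
    have p1 : 0 < 1 - τ := by linarith
    have p2 : 0 < 1 - q := by linarith
    have := Real.log_le_sub_one_of_pos (div_pos p1 p2)
    rw [Real.log_div p1.ne' p2.ne'] at this
    have e : (1 - τ) / (1 - q) - 1 ≤ q - τ := by
      rw [sub_le_iff_le_add, div_le_iff₀ p2]; nlinarith
    linarith
  have e3 : 1 - 2 * (q / 2) = 1 - q := by ring
  rw [e3, zero_pow two_ne_zero, zero_div, add_zero]
  linarith

end up

section num

lemma mono_ge (f f' : ℝ → ℝ) (b : ℝ) (hb : 0 ≤ b)
    (hf : ∀ t, 0 ≤ t → t ≤ b → HasDerivAt f (f' t) t) (hf' : ∀ t, 0 ≤ t → t ≤ b → 0 ≤ f' t) :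
    f 0 ≤ f b := by
  have hm : MonotoneOn f (Set.Icc 0 b) := by
    refine monotoneOn_of_deriv_nonneg (convex_Icc _ _)
      (fun t ht => (hf t ht.1 ht.2).continuousAt.continuousWithinAt)
      (fun t ht => ?_) (fun t ht => ?_)
    · rw [interior_Icc] at ht
      exact (hf t ht.1.le ht.2.le).differentiableAt.differentiableWithinAt
    · rw [interior_Icc] at ht
      rw [(hf t ht.1.le ht.2.le).deriv]; exact hf' t ht.1.le ht.2.le
  exact hm ⟨le_refl _, hb⟩ ⟨hb, le_refl _⟩ hb

lemma log_up (b : ℝ) (hb : 0 ≤ b) :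
    Real.log (1 + b) ≤ b - b ^ 2 / 2 + b ^ 3 / 3 - b ^ 4 / 4 + b ^ 5 / 5 := by
  have := mono_ge (fun t => t - t ^ 2 / 2 + t ^ 3 / 3 - t ^ 4 / 4 + t ^ 5 / 5 - Real.log (1 + t))
    (fun t => 1 - (2 * t ^ 1 * 1) / 2 + (3 * t ^ 2 * 1) / 3 - (4 * t ^ 3 * 1) / 4 + (5 * t ^ 4 * 1) / 5 - 1 / (1 + t)) b hb
    (fun t h0 _ => by
      have i := hasDerivAt_id t
      exact (((((i.sub ((i.pow 2).div_const 2)).add ((i.pow 3).div_const 3)).sub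
        ((i.pow 4).div_const 4)).add ((i.pow 5).div_const 5)).sub
        ((i.const_add 1).log (by simp; linarith))))
    (fun t h0 _ => by
      have : 0 < 1 + t := by linarith
      have e : 1 - (2 * t ^ 1 * 1) / 2 + (3 * t ^ 2 * 1) / 3 - (4 * t ^ 3 * 1) / 4 + (5 * t ^ 4 * 1) / 5 - 1 / (1 + t) = t ^ 5 / (1 + t) := by
        field_simp; ring
      rw [e]; positivity)
  simp at this
  linarith

lemma log_lo (b : ℝ) (hb : 0 ≤ b) (hb1 : b ≤ 1 / 4) :
    b - b ^ 2 / 2 + b ^ 3 / 4 ≤ Real.log (1 + b) := by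
  have := mono_ge (fun t => Real.log (1 + t) - (t - t ^ 2 / 2 + t ^ 3 / 4))
    (fun t => 1 / (1 + t) - (1 - (2 * t ^ 1 * 1) / 2 + (3 * t ^ 2 * 1) / 4)) b hb
    (fun t h0 _ => by
      have i := hasDerivAt_id t
      exact ((i.const_add 1).log (by simp; linarith)).sub
        ((i.sub ((i.pow 2).div_const 2)).add ((i.pow 3).div_const 4)))
    (fun t h0 h1 => by
      have : 0 < 1 + t := by linarith
      have e : 1 / (1 + t) - (1 - (2 * t ^ 1 * 1) / 2 + (3 * t ^ 2 * 1) / 4) = t ^ 2 * (1 - 3 * t) / 4 / (1 + t) := by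
        field_simp; ring
      rw [e]
      have : 0 ≤ 1 - 3 * t := by linarith
      positivity)
  simp at this
  linarith

lemma log_one_sub (b : ℝ) (hb : 0 ≤ b) (hb1 : b ≤ 1 / 2) :
    - b - b ^ 2 ≤ Real.log (1 - b) := by
  have := mono_ge (fun t => Real.log (1 - t) - (- t - t ^ 2))
    (fun t => -1 / (1 - t) - (- 1 - (2 * t ^ 1 * 1))) b hb
    (fun t h0 _ => by
      have i := hasDerivAt_id t
      exact ((i.const_sub 1).log (by simp; intro h; linarith)).sub
        (i.neg.sub (i.pow 2)))
    (fun t h0 h1 => by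
      have : 0 < 1 - t := by linarith
      have e : -1 / (1 - t) - (- 1 - (2 * t ^ 1 * 1)) = t * (1 - 2 * t) / (1 - t) := by
        field_simp; ring
      rw [e]
      have : 0 ≤ 1 - 2 * t := by linarith
      positivity)
  simp at this
  linarith

lemma num_base (m T : ℝ) (hm : 2 ≤ m) (hT : 4 * Real.log m ≤ T) :
    0.38 ≤ 1 / m + T / 32 ∧ 2.77 ≤ T := by
  have hl2 := Real.log_two_gt_d9
  have h1 : Real.log 2 ≤ Real.log m := Real.log_le_log (by norm_num) hm
  refine ⟨?_, by linarith⟩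
  have hm0 : 0 < m := by linarith
  have h2 := Real.log_le_sub_one_of_pos (show 0 < 8 / m by positivity)
  rw [Real.log_div (by norm_num) hm0.ne', show (8 : ℝ) = 2 ^ 3 by norm_num, Real.log_pow] at h2
  have : (2 : ℝ) ^ 3 / m = 8 * (1 / m) := by ring
  rw [this] at h2
  push_cast at h2
  linarith

lemma num_up (n m ε : ℝ) (hε : 0 < ε) (hm : 2 ≤ m) (hn : 0 ≤ n)
    (hD : 0 < ε ^ 2 / 2 - ε ^ 3 / 3)
    (hT : 4 * Real.log m ≤ n * (ε ^ 2 / 2 - ε ^ 3 / 3)) :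
    ∃ h τ, 0 < h ∧ h < 1 / 4 ∧ τ = 2 * h / (1 - 2 * h) ∧
      -n / 2 * Real.log (1 - 2 * h) + 1 / 2 * (-τ - Real.log (1 - τ)) - h * ((1 + ε) * n)
        ≤ - (n * (ε ^ 2 / 2 - ε ^ 3 / 3)) / 2 + 1 / m := by
  obtain ⟨hb, hT2⟩ := num_base m _ hm hT
  have hm0 : 0 < 1 / m := by positivity
  by_cases h : ε ≤ 1 / 2
  · refine ⟨ε / (2 * (1 + ε)), ε, by positivity, ?_, ?_, ?_⟩
    · rw [div_lt_iff₀ (by positivity)]; linarith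
    · field_simp; ring
    · have e1 : 1 - 2 * (ε / (2 * (1 + ε))) = (1 + ε)⁻¹ := by field_simp; ring
      have e2 : ε / (2 * (1 + ε)) * ((1 + ε) * n) = ε * n / 2 := by field_simp
      rw [e1, e2, Real.log_inv]
      have h1 := log_up ε hε.le
      have h2 := log_one_sub ε hε.le h
      have h3 := mul_le_mul_of_nonneg_left h1 hn
      have h4 : 1 ≤ n * (ε ^ 2 * (1 / 4 - ε / 5)) := by
        have : 0 ≤ n * (ε ^ 2 * (1 / 40 - ε / 20)) :=
          mul_nonneg hn (mul_nonneg (sq_nonneg _) (by linarith))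
        nlinarith
      have h5 := mul_le_mul_of_nonneg_left h4 (sq_nonneg ε)
      nlinarith
  · push Not at h
    refine ⟨1 / 6, 1 / 2, by norm_num, by norm_num, by norm_num, ?_⟩
    have e1 : Real.log (1 - 2 * (1 / 6)) = - Real.log (1 + 1 / 2) := by
      rw [← Real.log_inv]; norm_num
    have e2 : Real.log (1 - 1 / 2) = - Real.log 2 := by
      rw [← Real.log_inv]; norm_num
    rw [e1, e2]
    have h1 := log_up (1 / 2) (by norm_num)
    have h2 := Real.log_two_lt_d9
    have h3 := mul_le_mul_of_nonneg_left h1 hn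
    have h4 : 0 ≤ (1 + ε) / 6 - 0.20375 - (17 / 32) * (ε ^ 2 / 2 - ε ^ 3 / 3) := by
      nlinarith [mul_nonneg (sub_nonneg.2 h.le) (sq_nonneg (ε - 1 / 2)),
        mul_nonneg (sub_nonneg.2 h.le) (sq_nonneg (ε - 3 / 4)), mul_nonneg (sub_nonneg.2 h.le) (sq_nonneg ε), sq_nonneg (ε - 1/2)]
    have h5 := mul_nonneg hn h4
    nlinarith

lemma num_lo (n m ε : ℝ) (hε : 0 < ε) (hε1 : ε ≤ 1) (hm : 2 ≤ m) (hn : 0 ≤ n)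
    (hT : 4 * Real.log m ≤ n * (ε ^ 2 / 2 - ε ^ 3 / 3)) :
    ∃ h, 0 ≤ h ∧ h ≤ 1 / 8 ∧
      8 * h - (n + 6) / 2 * Real.log (1 + 2 * h) + h * ((1 - ε) * n)
        ≤ - (n * (ε ^ 2 / 2 - ε ^ 3 / 3)) / 2 + 1 / m := by
  obtain ⟨hb, hT2⟩ := num_base m _ hm hT
  have hm0 : 0 < 1 / m := by positivity
  by_cases h : ε ≤ 1 / 4
  · refine ⟨ε / 2, by positivity, by linarith, ?_⟩
    have h1 := log_lo ε hε.le h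
    have h3 := mul_le_mul_of_nonneg_left h1 hn
    rw [show 2 * (ε / 2) = ε by ring]
    have h4 : 5.54 ≤ n * ε ^ 2 := by
      have : 0 ≤ n * ε ^ 3 := by positivity
      nlinarith
    have h5 := mul_le_mul_of_nonneg_left h4 hε.le
    have : 0 ≤ ε ^ 3 := by positivity
    nlinarith
  · push Not at h
    refine ⟨1 / 8, by norm_num, by norm_num, ?_⟩
    rw [show (2 : ℝ) * (1 / 8) = 1 / 4 by norm_num]
    have h1 := log_lo (1 / 4) (by norm_num) (by norm_num)
    have h3 := mul_le_mul_of_nonneg_left h1 hn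
    have h4 : 0 ≤ ε / 8 - 0.01368 - (17 / 32) * (ε ^ 2 / 2 - ε ^ 3 / 3) := by
      nlinarith [mul_nonneg (sub_nonneg.2 h.le) (sq_nonneg (ε - 1 / 2)),
        mul_nonneg (sub_nonneg.2 h.le) (sq_nonneg (ε - 5 / 8)), mul_nonneg (sub_nonneg.2 h.le) (sq_nonneg (ε - 3 / 4)), mul_nonneg (sub_nonneg.2 h.le) (sub_nonneg.2 hε1)]
    have h5 := mul_nonneg hn h4
    nlinarith

end num

section fin
variable {N : ℕ}

open Classical in
lemma tail_up (χ x : Fin N → ℝ) (hχ : ∀ i, χ i = 0 ∨ χ i = 1) (hx : ∑ i, x i ^ 2 = 1)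
    (n m ε : ℝ) (hn : ∑ i, χ i = n) (hε : 0 < ε) (hm : 2 ≤ m) (hn0 : 0 ≤ n)
    (hD : 0 < ε ^ 2 / 2 - ε ^ 3 / 3)
    (hT : 4 * Real.log m ≤ n * (ε ^ 2 / 2 - ε ^ 3 / 3)) :
    (#{r | (1 + ε) * n < ∑ a, Yv χ x r a ^ 2} : ℝ) ≤ Fintype.card (Fin N × Fin N → Bool) *
      Real.exp (- (n * (ε ^ 2 / 2 - ε ^ 3 / 3)) / 2 + 1 / m) := by
  obtain ⟨h, τ, h0, h4, hτ, hle⟩ := num_up n m ε hε hm hn0 hD hT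
  have h1 := upper_app χ x hχ hx h τ h0 h4 hτ
  rw [hn] at h1
  have h2 : (#{r | (1 + ε) * n < ∑ a, Yv χ x r a ^ 2} : ℝ) * Real.exp (h * ((1 + ε) * n)) ≤
      ∑ r, Real.exp (h * ∑ a, Yv χ x r a ^ 2) := by
    rw [← nsmul_eq_mul]
    refine (Finset.card_nsmul_le_sum _ (fun r => Real.exp (h * ∑ a, Yv χ x r a ^ 2)) _ ?_).trans
      (Finset.sum_le_sum_of_subset_of_nonneg (Finset.subset_univ _) fun _ _ _ => (Real.exp_pos _).le)
    intro r hr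
    simp only [Finset.mem_filter, Finset.mem_univ, true_and] at hr
    exact Real.exp_le_exp.2 (mul_le_mul_of_nonneg_left hr.le h0.le)
  have h3 := h2.trans h1
  rw [← le_div_iff₀ (Real.exp_pos _), mul_div_assoc, ← Real.exp_sub] at h3
  exact h3.trans (mul_le_mul_of_nonneg_left (Real.exp_le_exp.2 hle) (by positivity))

open Classical in
lemma tail_lo (χ x : Fin N → ℝ) (hχ : ∀ i, χ i = 0 ∨ χ i = 1) (hx : ∑ i, x i ^ 2 = 1)
    (n m ε : ℝ) (hn : ∑ i, χ i = n) (hε : 0 < ε) (hm : 2 ≤ m) (hn0 : 0 ≤ n)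
    (hT : 4 * Real.log m ≤ n * (ε ^ 2 / 2 - ε ^ 3 / 3)) :
    (#{r | ∑ a, Yv χ x r a ^ 2 < (1 - ε) * n} : ℝ) ≤ Fintype.card (Fin N × Fin N → Bool) *
      Real.exp (- (n * (ε ^ 2 / 2 - ε ^ 3 / 3)) / 2 + 1 / m) := by
  by_cases hε1 : ε ≤ 1
  · obtain ⟨h, h0, h4, hle⟩ := num_lo n m ε hε hε1 hm hn0 hT
    have h1 := lower_app χ x hχ hx h h0 h4
    rw [hn] at h1
    have h2 : (#{r | ∑ a, Yv χ x r a ^ 2 < (1 - ε) * n} : ℝ) * Real.exp (-(h * ((1 - ε) * n))) ≤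
        ∑ r, Real.exp (-h * ∑ a, Yv χ x r a ^ 2) := by
      rw [← nsmul_eq_mul]
      refine (Finset.card_nsmul_le_sum _ (fun r => Real.exp (-h * ∑ a, Yv χ x r a ^ 2)) _ ?_).trans
        (Finset.sum_le_sum_of_subset_of_nonneg (Finset.subset_univ _) fun _ _ _ => (Real.exp_pos _).le)
      intro r hr
      simp only [Finset.mem_filter, Finset.mem_univ, true_and] at hr
      refine Real.exp_le_exp.2 ?_
      have := mul_le_mul_of_nonneg_left hr.le h0
      linarith
    have h3 := h2.trans h1
    rw [← le_div_iff₀ (Real.exp_pos _), mul_div_assoc, ← Real.exp_sub] at h3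
    exact h3.trans (mul_le_mul_of_nonneg_left (Real.exp_le_exp.2 (by linarith)) (by positivity))
  · push Not at hε1
    have : (Finset.univ.filter fun r => ∑ a, Yv χ x r a ^ 2 < (1 - ε) * n) = ∅ := by
      refine Finset.filter_eq_empty_iff.2 fun r _ => ?_
      have : 0 ≤ ∑ a, Yv χ x r a ^ 2 := Finset.sum_nonneg fun _ _ => sq_nonneg _
      nlinarith
    rw [this]
    simp only [Finset.card_empty, Nat.cast_zero]
    positivity

def chi (N n : ℕ) (a : Fin N) : ℝ := if a.val < n then 1 else 0

lemma sum_chi {n : ℕ} (hn : n ≤ N) (F : Fin N → ℝ) :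
    ∑ i : Fin n, F (Fin.castLE hn i) = ∑ a, chi N n a * F a := by
  refine Fintype.sum_of_injective (Fin.castLE hn) (Fin.castLE_injective hn) _ _ ?_ ?_
  · intro a ha
    have : ¬ a.val < n := fun h => ha ⟨⟨a.val, h⟩, by ext; rfl⟩
    simp [chi, this]
  · intro i
    simp [chi]

lemma proj_Y {n : ℕ} (hn : n ≤ N) (ω : Fin N → Fin N → Bool) (u v x : Fin N → ℝ) (c : ℝ)
    (hx : ∀ k, u k - v k = c * x k) :
    n * ∑ i : Fin n, (proj hn ω u i - proj hn ω v i) ^ 2 * (if n = 0 then 0 else 1) =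
      c ^ 2 * ∑ a, Yv (chi N n) x (fun e => ω e.1 e.2) a ^ 2 := by
  have h1 : ∀ i : Fin n, (n : ℝ) * ((proj hn ω u i - proj hn ω v i) ^ 2 * (if n = 0 then 0 else 1)) =
      c ^ 2 * (∑ k, rsym ω (Fin.castLE hn i) k * x k) ^ 2 := by
    intro i
    have hn0 : n ≠ 0 := fun h => by have := i.2; omega
    have hn1 : (0 : ℝ) < n := by positivity
    have : proj hn ω u i - proj hn ω v i =
        (Real.sqrt n)⁻¹ * (c * ∑ k, rsym ω (Fin.castLE hn i) k * x k) := by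
      unfold proj
      rw [← mul_sub, ← Finset.sum_sub_distrib, Finset.mul_sum _ _ c]
      congr 1
      refine Finset.sum_congr rfl fun k _ => ?_
      rw [← mul_sub, hx]; ring
    rw [this, mul_pow, inv_pow, Real.sq_sqrt hn1.le]
    simp only [hn0, if_false]
    field_simp
  rw [Finset.mul_sum]
  refine (Finset.sum_congr rfl (fun i _ => h1 i)).trans ?_
  rw [← Finset.mul_sum]
  congr 1
  rw [sum_chi hn (fun a => (∑ k, rsym ω a k * x k) ^ 2)]
  refine Finset.sum_congr rfl fun a _ => ?_
  rw [Yv_eq, mul_pow]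
  congr 1
  simp [chi]

lemma card_Om : Fintype.card (Fin N → Fin N → Bool) = Fintype.card (Fin N × Fin N → Bool) :=
  Fintype.card_congr (Equiv.curry (Fin N) (Fin N) Bool).symm

open Classical in
lemma card_transfer (P : (Fin N → Fin N → Bool) → Prop) (Q : (Fin N × Fin N → Bool) → Prop)
    (h : ∀ ω, P ω → Q (fun e => ω e.1 e.2)) :
    (#{ω | P ω} : ℝ) ≤ #{r | Q r} := by
  norm_cast
  refine Finset.card_le_card_of_injOn (fun ω e => ω e.1 e.2) ?_ ?_
  · intro ω hω
    simp only [Finset.coe_filter, Finset.mem_univ, true_and, Set.mem_ofPred_eq] at hω ⊢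
    exact h ω hω
  · intro ω _ ω' _ hh
    funext i j
    exact congrFun hh (i, j)

open Classical in
lemma bad_bound {n : ℕ} (hnN : n ≤ N) (hn0 : 0 < n) (m ε : ℝ) (u v : Fin N → ℝ)
    (hε : 0 < ε) (hm : 2 ≤ m) (hD : 0 < ε ^ 2 / 2 - ε ^ 3 / 3)
    (hT : 4 * Real.log m ≤ n * (ε ^ 2 / 2 - ε ^ 3 / 3)) :
    ((#{ω | (1 + ε) * ∑ k, (u k - v k) ^ 2 <
        ∑ i : Fin n, (proj hnN ω u i - proj hnN ω v i) ^ 2} : ℝ) ≤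
      Fintype.card (Fin N × Fin N → Bool) *
      Real.exp (- (n * (ε ^ 2 / 2 - ε ^ 3 / 3)) / 2 + 1 / m)) ∧
    ((#{ω | ∑ i : Fin n, (proj hnN ω u i - proj hnN ω v i) ^ 2 <
        (1 - ε) * ∑ k, (u k - v k) ^ 2} : ℝ) ≤
      Fintype.card (Fin N × Fin N → Bool) *
      Real.exp (- (n * (ε ^ 2 / 2 - ε ^ 3 / 3)) / 2 + 1 / m)) := by
  have hn1 : (0 : ℝ) < n := by exact_mod_cast hn0
  have hχ : ∀ i, chi N n i = 0 ∨ chi N n i = 1 := fun i => by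
    unfold chi; split_ifs <;> simp
  have hsum : ∑ i, chi N n i = n := by
    have := sum_chi hnN (fun _ => 1)
    simpa using this.symm
  have S0 : 0 ≤ ∑ k, (u k - v k) ^ 2 := Finset.sum_nonneg fun _ _ => sq_nonneg _
  rcases S0.eq_or_lt with h0 | h0
  · have huv : u = v := by
      funext k
      have := (Finset.sum_eq_zero_iff_of_nonneg fun k _ => sq_nonneg (u k - v k)).1 h0.symm k
        (Finset.mem_univ k)
      have := pow_eq_zero_iff two_ne_zero |>.1 this
      linarith
    subst huv
    simp only [sub_self, ne_eq, OfNat.ofNat_ne_zero, not_false_eq_true, zero_pow,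
      Finset.sum_const_zero, mul_zero, lt_self_iff_false, Finset.filter_false, Finset.card_empty,
      Nat.cast_zero, and_self]
    positivity
  · obtain ⟨c, hc0, hc⟩ : ∃ c : ℝ, 0 < c ∧ c ^ 2 = ∑ k, (u k - v k) ^ 2 :=
      ⟨_, Real.sqrt_pos.2 h0, Real.sq_sqrt h0.le⟩
    obtain ⟨x, hx⟩ : ∃ x : Fin N → ℝ, ∀ k, u k - v k = c * x k :=
      ⟨fun k => (u k - v k) / c, fun k => by field_simp⟩
    have hx1 : ∑ k, x k ^ 2 = 1 := by
      simp_rw [hx, mul_pow, ← Finset.mul_sum] at hc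
      have : c ^ 2 ≠ 0 := by positivity
      field_simp at hc
      linarith
    have hc2 : 0 < c ^ 2 := by positivity
    have hp : ∀ ω, n * ∑ i : Fin n, (proj hnN ω u i - proj hnN ω v i) ^ 2 =
        c ^ 2 * ∑ a, Yv (chi N n) x (fun e => ω e.1 e.2) a ^ 2 := fun ω => by
      have := proj_Y hnN ω u v x c hx
      simpa [hn0.ne'] using this
    rw [← hc]
    constructor
    · refine (card_transfer _ (fun r => (1 + ε) * n < ∑ a, Yv (chi N n) x r a ^ 2) ?_).trans
        (tail_up (chi N n) x hχ hx1 n m ε hsum hε hm hn1.le hD hT)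
      intro ω hω
      have h1 := mul_lt_mul_of_pos_left hω hn1
      rw [hp] at h1
      refine lt_of_mul_lt_mul_left (a := c ^ 2) ?_ hc2.le
      linarith
    · refine (card_transfer _ (fun r => ∑ a, Yv (chi N n) x r a ^ 2 < (1 - ε) * n) ?_).trans
        (tail_lo (chi N n) x hχ hx1 n m ε hsum hε hm hn1.le hT)
      intro ω hω
      have h1 := mul_lt_mul_of_pos_left hω hn1
      rw [hp] at h1
      refine lt_of_mul_lt_mul_left (a := c ^ 2) ?_ hc2.le
      linarith

end fin

open Classical in
theorem stmt11_aux {N n m : ℕ} (hnN : n ≤ N) (ε β : ℝ) (hε : 0 < ε) (hβ : 0 < β)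
    (hpos : 0 < ε ^ 2 / 2 - ε ^ 3 / 3)
    (p : Fin m → Fin N → ℝ) (hm : 2 ≤ m)
    (hn : ((4 + 2 * β) / (ε ^ 2 / 2 - ε ^ 3 / 3)) * Real.log m ≤ (n : ℝ)) :
    (#{ω | ¬ ∀ u v : Fin m,
        (1 - ε) * ∑ k, (p u k - p v k) ^ 2
            ≤ ∑ i : Fin n, (proj hnN ω (p u) i - proj hnN ω (p v) i) ^ 2 ∧
        ∑ i : Fin n, (proj hnN ω (p u) i - proj hnN ω (p v) i) ^ 2
            ≤ (1 + ε) * ∑ k, (p u k - p v k) ^ 2} : ℝ) ≤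
      (m : ℝ) ^ (-β) * Fintype.card (Fin N → Fin N → Bool) := by
  have hm1 : (2 : ℝ) ≤ m := by exact_mod_cast hm
  have hm0 : (0 : ℝ) < m := by linarith
  have hlog : 0 < Real.log m := Real.log_pos (by linarith)
  have hT0 : (4 + 2 * β) * Real.log m ≤ n * (ε ^ 2 / 2 - ε ^ 3 / 3) := by
    rw [div_mul_eq_mul_div, div_le_iff₀ hpos] at hn
    exact hn
  have hT : 4 * Real.log m ≤ n * (ε ^ 2 / 2 - ε ^ 3 / 3) := by nlinarith
  have hn0 : 0 < n := by
    rcases Nat.eq_zero_or_pos n with h | h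
    · rw [h] at hT; simp at hT; linarith
    · exact h
  set B : ℝ := Fintype.card (Fin N × Fin N → Bool) *
      Real.exp (- (n * (ε ^ 2 / 2 - ε ^ 3 / 3)) / 2 + 1 / m) with hB
  have hb := fun u v : Fin m => bad_bound hnN hn0 m ε (p u) (p v) hε hm1 hpos hT
  obtain ⟨bad, hbad⟩ : ∃ bad : Fin m × Fin m → Finset (Fin N → Fin N → Bool), bad = fun q =>
    if q.1 < q.2 then ({ω | (1 + ε) * ∑ k, (p q.1 k - p q.2 k) ^ 2 <
        ∑ i : Fin n, (proj hnN ω (p q.1) i - proj hnN ω (p q.2) i) ^ 2} : Finset _)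
    else ({ω | ∑ i : Fin n, (proj hnN ω (p q.1) i - proj hnN ω (p q.2) i) ^ 2 <
        (1 - ε) * ∑ k, (p q.1 k - p q.2 k) ^ 2} : Finset _) := ⟨_, rfl⟩
  have hcard : ∀ q, ((bad q).card : ℝ) ≤ B := by
    intro q
    rw [hbad]
    dsimp only
    split_ifs
    · exact (hb _ _).1
    · exact (hb _ _).2
  have hsym1 : ∀ u v : Fin m, ∑ k, (p u k - p v k) ^ 2 = ∑ k, (p v k - p u k) ^ 2 := fun u v =>
    Finset.sum_congr rfl fun _ _ => by ring
  have hsym2 : ∀ (u v : Fin m) ω, ∑ i : Fin n, (proj hnN ω (p u) i - proj hnN ω (p v) i) ^ 2 =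
    ∑ i : Fin n, (proj hnN ω (p v) i - proj hnN ω (p u) i) ^ 2 := fun u v ω =>
    Finset.sum_congr rfl fun _ _ => by ring
  have hsub : (Finset.univ.filter fun ω => ¬ ∀ u v : Fin m,
        (1 - ε) * ∑ k, (p u k - p v k) ^ 2
            ≤ ∑ i : Fin n, (proj hnN ω (p u) i - proj hnN ω (p v) i) ^ 2 ∧
        ∑ i : Fin n, (proj hnN ω (p u) i - proj hnN ω (p v) i) ^ 2
            ≤ (1 + ε) * ∑ k, (p u k - p v k) ^ 2) ⊆
      (Finset.univ : Finset (Fin m)).offDiag.biUnion bad := by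
    intro ω hω
    simp only [Finset.mem_filter, Finset.mem_univ, true_and] at hω
    push Not at hω
    obtain ⟨u, v, huv⟩ := hω
    have hne : u ≠ v := by
      rintro rfl
      have := huv (by simp)
      simp at this
    simp only [Finset.mem_biUnion, Finset.mem_offDiag, Finset.mem_univ, true_and]
    by_cases h1 : (1 - ε) * ∑ k, (p u k - p v k) ^ 2
            ≤ ∑ i : Fin n, (proj hnN ω (p u) i - proj hnN ω (p v) i) ^ 2
    · have h2 := huv h1
      rcases lt_or_gt_of_ne hne with h | h
      · refine ⟨(u, v), hne, ?_⟩
        rw [hbad]; simp only [h, if_true, Finset.mem_filter, Finset.mem_univ, true_and]; exact h2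
      · refine ⟨(v, u), hne.symm, ?_⟩
        rw [hbad]; simp only [h, if_true, Finset.mem_filter, Finset.mem_univ, true_and]
        rw [hsym1 v u, hsym2 v u]; exact h2
    · push Not at h1
      rcases lt_or_gt_of_ne hne with h | h
      · refine ⟨(v, u), hne.symm, ?_⟩
        rw [hbad]; simp only [h.not_gt, if_false, Finset.mem_filter, Finset.mem_univ, true_and]
        rw [hsym1 v u, hsym2 v u]; exact h1
      · refine ⟨(u, v), hne, ?_⟩
        rw [hbad]; simp only [h.not_gt, if_false, Finset.mem_filter, Finset.mem_univ, true_and]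
        exact h1
  have hle : (#{ω | ¬ ∀ u v : Fin m,
        (1 - ε) * ∑ k, (p u k - p v k) ^ 2
            ≤ ∑ i : Fin n, (proj hnN ω (p u) i - proj hnN ω (p v) i) ^ 2 ∧
        ∑ i : Fin n, (proj hnN ω (p u) i - proj hnN ω (p v) i) ^ 2
            ≤ (1 + ε) * ∑ k, (p u k - p v k) ^ 2} : ℝ) ≤ (m * m - m : ℝ) * B := by
    calc _ ≤ (((Finset.univ : Finset (Fin m)).offDiag.biUnion bad).card : ℝ) := by
            exact_mod_cast Finset.card_le_card hsub
      _ ≤ ∑ q ∈ (Finset.univ : Finset (Fin m)).offDiag, ((bad q).card : ℝ) := by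
            exact_mod_cast Finset.card_biUnion_le
      _ ≤ ∑ q ∈ (Finset.univ : Finset (Fin m)).offDiag, B := Finset.sum_le_sum fun q _ => hcard q
      _ = (m * m - m : ℝ) * B := by
            rw [Finset.sum_const, Finset.offDiag_card, nsmul_eq_mul, Finset.card_univ, Fintype.card_fin,
              Nat.cast_sub (Nat.le_mul_self m)]
            push_cast; ring
  refine hle.trans ?_
  rw [card_Om, hB, mul_comm ((m : ℝ) ^ (-β)), mul_left_comm]
  refine mul_le_mul_of_nonneg_left ?_ (by positivity)
  have k1 : (m * m - m : ℝ) ≤ Real.exp (2 * Real.log m - 1 / m) := by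
    have e1 : Real.exp (2 * Real.log m) = m * m := by
      rw [two_mul, Real.exp_add, Real.exp_log hm0]
    have e2 := Real.add_one_le_exp (-(1 / (m : ℝ)))
    rw [show 2 * Real.log (m : ℝ) - 1 / m = 2 * Real.log m + -(1 / (m : ℝ)) by ring, Real.exp_add, e1]
    have : (m * m - m : ℝ) = m * m * (-(1 / (m : ℝ)) + 1) := by field_simp; ring
    rw [this]
    exact mul_le_mul_of_nonneg_left e2 (by positivity)
  calc _ ≤ Real.exp (2 * Real.log m - 1 / m) * Real.exp (- (n * (ε ^ 2 / 2 - ε ^ 3 / 3)) / 2 + 1 / m) :=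
        mul_le_mul_of_nonneg_right k1 (Real.exp_pos _).le
    _ ≤ Real.exp (Real.log m * (-β)) := by
        rw [← Real.exp_add]
        exact Real.exp_le_exp.2 (by linarith)
    _ = _ := by rw [Real.rpow_def_of_pos hm0]

theorem stmt11 {N n m : ℕ} (hnN : n ≤ N) (ε β : ℝ) (hε : 0 < ε) (hβ : 0 < β)
    (hpos : 0 < ε ^ 2 / 2 - ε ^ 3 / 3)
    (p : Fin m → Fin N → ℝ)
    (hn : ((4 + 2 * β) / (ε ^ 2 / 2 - ε ^ 3 / 3)) * Real.log m ≤ (n : ℝ)) :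
    ENNReal.ofReal (1 - (m : ℝ) ^ (-β)) ≤
      (μsym N) {ω | ∀ u v : Fin m,
        (1 - ε) * ∑ k, (p u k - p v k) ^ 2
            ≤ ∑ i : Fin n, (proj hnN ω (p u) i - proj hnN ω (p v) i) ^ 2 ∧
        ∑ i : Fin n, (proj hnN ω (p u) i - proj hnN ω (p v) i) ^ 2
            ≤ (1 + ε) * ∑ k, (p u k - p v k) ^ 2} := by
  classical
  by_cases hm : 2 ≤ m
  · have key := stmt11_aux hnN ε β hε hβ hpos p hm hn
    unfold μsym
    rw [PMF.toMeasure_uniformOfFintype_apply _ (Set.toFinite _).measurableSet]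
    have hc0 : (Fintype.card (Fin N → Fin N → Bool) : ENNReal) ≠ 0 := by
      simp
    rw [ENNReal.le_div_iff_mul_le (Or.inl hc0) (Or.inl (ENNReal.natCast_ne_top _)),
      ← ENNReal.ofReal_natCast, ← ENNReal.ofReal_natCast,
      ← ENNReal.ofReal_mul' (Nat.cast_nonneg _)]
    refine ENNReal.ofReal_le_ofReal ?_
    have hsplit := Finset.card_filter_add_card_filter_not (s := (Finset.univ : Finset (Fin N → Fin N → Bool)))
      (p := fun ω => ∀ u v : Fin m,
        (1 - ε) * ∑ k, (p u k - p v k) ^ 2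
            ≤ ∑ i : Fin n, (proj hnN ω (p u) i - proj hnN ω (p v) i) ^ 2 ∧
        ∑ i : Fin n, (proj hnN ω (p u) i - proj hnN ω (p v) i) ^ 2
            ≤ (1 + ε) * ∑ k, (p u k - p v k) ^ 2)
    have hs2 := congrArg (fun t : ℕ => (t : ℝ)) hsplit
    simp only [Nat.cast_add, Finset.card_univ] at hs2
    have hcc := Fintype.card_subtype (fun ω => ∀ u v : Fin m,
        (1 - ε) * ∑ k, (p u k - p v k) ^ 2
            ≤ ∑ i : Fin n, (proj hnN ω (p u) i - proj hnN ω (p v) i) ^ 2 ∧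
        ∑ i : Fin n, (proj hnN ω (p u) i - proj hnN ω (p v) i) ^ 2
            ≤ (1 + ε) * ∑ k, (p u k - p v k) ^ 2)
    have hcc2 := congrArg (fun t : ℕ => (t : ℝ)) hcc
    refine le_trans ?_ (le_of_eq (hcc2.symm.trans ?_))
    · rw [sub_mul, one_mul]
      linarith
    · congr 1
  · have hss : ∀ u v : Fin m, u = v := fun u v => by
      ext; have := u.2; have := v.2; omega
    have huniv : {ω | ∀ u v : Fin m,
        (1 - ε) * ∑ k, (p u k - p v k) ^ 2
            ≤ ∑ i : Fin n, (proj hnN ω (p u) i - proj hnN ω (p v) i) ^ 2 ∧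
        ∑ i : Fin n, (proj hnN ω (p u) i - proj hnN ω (p v) i) ^ 2
            ≤ (1 + ε) * ∑ k, (p u k - p v k) ^ 2} = Set.univ := by
      refine Set.eq_univ_of_forall fun ω u v => ?_
      rw [hss u v]; simp
    rw [huniv]
    have : (μsym N) Set.univ = 1 := by
      unfold μsym; exact measure_univ
    rw [this]
    refine ENNReal.ofReal_le_one.2 ?_
    have : (0 : ℝ) ≤ (m : ℝ) ^ (-β) := Real.rpow_nonneg (Nat.cast_nonneg _) _
    linarith
end
end

section
/- Let Φ be an n × N real matrix, k ≥ 1, and suppose there exists δ with 0 < δ < √2 − 1 such that (1−δ)·‖w‖₂² ≤ ‖Φw‖₂² ≤ (1+δ)·‖w‖₂² for every 2k-sparse vector w ∈ ℝ^N. If x ∈ ℝ^N is k-sparse and y = Φx, then any vector x* with Φx* = y and ‖x*‖₁ ≤ ‖z‖₁ for all z with Φz = y must equal x; that is, ℓ₁-minimization recovers every k-sparse vector exactly. -/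
open Finset

noncomputable section

lemma aux_top {ι : Type*} [DecidableEq ι] (h : ι → ℝ) (S : Finset ι) (k : ℕ) (hk : k ≤ S.card) :
    ∃ T ⊆ S, T.card = k ∧ ∀ i ∈ T, ∀ j ∈ S \ T, |h j| ≤ |h i| := by
  induction k with
  | zero => exact ⟨∅, by simp, by simp, by simp⟩
  | succ k ih =>
    obtain ⟨T, hTS, hc, hT⟩ := ih (by omega)
    have hne : (S \ T).Nonempty := by
      rw [← Finset.card_pos, Finset.card_sdiff_of_subset hTS]; omega
    obtain ⟨a, ha, hmax⟩ := Finset.exists_max_image (S \ T) (fun j => |h j|) hne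
    have ha' := Finset.mem_sdiff.1 ha
    refine ⟨insert a T, ?_, ?_, ?_⟩
    · intro j hj
      rcases Finset.mem_insert.1 hj with rfl | hj
      · exact ha'.1
      · exact hTS hj
    · rw [Finset.card_insert_of_notMem ha'.2, hc]
    · intro i hi j hj
      have hj' : j ∈ S \ T := by
        simp only [Finset.mem_sdiff, Finset.mem_insert, not_or] at hj ⊢
        exact ⟨hj.1, hj.2.2⟩
      rcases Finset.mem_insert.1 hi with rfl | hi
      · exact hmax j hj'
      · exact hT i hi j hj'

lemma aux_block {ι : Type*} [DecidableEq ι] (h : ι → ℝ) (S : Finset ι) (k : ℕ) (hk : 1 ≤ k) :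
    ∃ T ⊆ S, T.card ≤ k ∧ (S.Nonempty → T.Nonempty) ∧ ∃ M : ℝ, 0 ≤ M ∧
      (∀ j ∈ S \ T, |h j| ≤ M) ∧ k * M ≤ ∑ j ∈ T, |h j| := by
  by_cases hS : k ≤ S.card
  · obtain ⟨T, hTS, hc, hT⟩ := aux_top h S k hS
    have hne : T.Nonempty := by rw [← Finset.card_pos]; omega
    obtain ⟨a, ha, hmin⟩ := Finset.exists_min_image T (fun j => |h j|) hne
    refine ⟨T, hTS, hc.le, fun _ => hne, |h a|, abs_nonneg _, fun j hj => hT a ha j hj, ?_⟩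
    have := Finset.card_nsmul_le_sum T (fun j => |h j|) (|h a|) hmin
    rw [hc, nsmul_eq_mul] at this
    exact this
  · refine ⟨S, subset_rfl, by omega, id, 0, le_rfl, by simp, ?_⟩
    simp only [mul_zero]
    exact Finset.sum_nonneg (fun _ _ => abs_nonneg _)

lemma aux_sum {ι : Type*} [DecidableEq ι] (h g : ι → ℝ) (k : ℕ) (hk : 1 ≤ k) (C : ℝ) (hC : 0 ≤ C)
    (m : ℕ) : ∀ (S : Finset ι), S.card ≤ m →
    (∀ T ⊆ S, T.card ≤ k → |∑ j ∈ T, g j| ≤ C * √(∑ j ∈ T, (h j)^2)) →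
    ∀ M : ℝ, 0 ≤ M → (∀ j ∈ S, |h j| ≤ M) →
    √k * |∑ j ∈ S, g j| ≤ C * (k * M + ∑ j ∈ S, |h j|) := by
  induction m with
  | zero =>
    intro S hS _ M hM _
    have : S = ∅ := by simpa using hS
    subst this
    simp; positivity
  | succ m ih =>
    intro S hS hg M hM hb
    rcases S.eq_empty_or_nonempty with rfl | hne
    · simp; positivity
    obtain ⟨T, hTS, hc, hTne, M', hM', hb', hs⟩ := aux_block h S k hk
    have hTpos := (hTne hne).card_pos
    have h1 := ih (S \ T) (by rw [Finset.card_sdiff_of_subset hTS]; omega)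
      (fun U hU => hg U (hU.trans Finset.sdiff_subset)) M' hM' hb'
    have h2 := hg T hTS hc
    have hT2 : ∑ j ∈ T, (h j)^2 ≤ k * M^2 := by
      have : ∑ j ∈ T, (h j)^2 ≤ ∑ j ∈ T, M^2 := by
        refine Finset.sum_le_sum fun j hj => ?_
        rw [← sq_abs]
        exact pow_le_pow_left₀ (abs_nonneg _) (hb j (hTS hj)) 2
      refine this.trans ?_
      rw [Finset.sum_const, nsmul_eq_mul]
      have : (T.card : ℝ) ≤ k := by exact_mod_cast hc
      gcongr
    have hT3 : √(∑ j ∈ T, (h j)^2) ≤ √k * M := by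
      refine (Real.sqrt_le_sqrt hT2).trans ?_
      rw [Real.sqrt_mul (by positivity), Real.sqrt_sq hM]
    have hkk : √(k:ℝ) * √k = k := Real.mul_self_sqrt (by positivity)
    have e1 := Finset.sum_sdiff (f := g) hTS
    have e2 := Finset.sum_sdiff (f := fun j => |h j|) hTS
    have h3 : |∑ j ∈ S, g j| ≤ |∑ j ∈ S \ T, g j| + C * (√k * M) := by
      rw [← e1]
      exact (abs_add_le _ _).trans (by gcongr; exact h2.trans (by gcongr))
    calc √k * |∑ j ∈ S, g j| ≤ √k * (|∑ j ∈ S \ T, g j| + C * (√k * M)) := by gcongr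
      _ = √k * |∑ j ∈ S \ T, g j| + C * ((√k * √k) * M) := by ring
      _ ≤ C * (k * M' + ∑ j ∈ S \ T, |h j|) + C * (k * M) := by rw [hkk]; gcongr
      _ ≤ C * (∑ j ∈ T, |h j| + ∑ j ∈ S \ T, |h j|) + C * (k * M) := by gcongr
      _ = C * (k * M + ∑ j ∈ S, |h j|) := by rw [← e2]; ring

lemma aux_orth {n N : ℕ} (k : ℕ) (Φ : Matrix (Fin n) (Fin N) ℝ)
    (δ : ℝ)
    (hRIP : ∀ w : Fin N → ℝ, (Finset.univ.filter (fun j => w j ≠ 0)).card ≤ 2 * k →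
      (1 - δ) * ∑ j, (w j) ^ 2 ≤ ∑ i, (Φ.mulVec w i) ^ 2 ∧
      ∑ i, (Φ.mulVec w i) ^ 2 ≤ (1 + δ) * ∑ j, (w j) ^ 2)
    (h : Fin N → ℝ) (U V : Finset (Fin N)) (hd : Disjoint U V) (hU : U.card ≤ k) (hV : V.card ≤ k)
    (s t : ℝ) :
    (1 - δ) * (s^2 * ∑ j ∈ U, (h j)^2 + t^2 * ∑ j ∈ V, (h j)^2) ≤
      ∑ i, (s * ∑ j ∈ U, Φ i j * h j + t * ∑ j ∈ V, Φ i j * h j)^2 ∧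
    ∑ i, (s * ∑ j ∈ U, Φ i j * h j + t * ∑ j ∈ V, Φ i j * h j)^2 ≤
    (1 + δ) * (s^2 * ∑ j ∈ U, (h j)^2 + t^2 * ∑ j ∈ V, (h j)^2) := by
  have key := hRIP (fun j => (if j ∈ U then s * h j else 0) + (if j ∈ V then t * h j else 0)) ?_
  · have e1 : ∑ j, ((if j ∈ U then s * h j else 0) + (if j ∈ V then t * h j else 0))^2
        = s^2 * ∑ j ∈ U, (h j)^2 + t^2 * ∑ j ∈ V, (h j)^2 := by
      have : ∀ j, ((if j ∈ U then s * h j else 0) + (if j ∈ V then t * h j else 0))^2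
        = (if j ∈ U then s^2 * (h j)^2 else 0) + (if j ∈ V then t^2 * (h j)^2 else 0) := by
        intro j
        by_cases h1 : j ∈ U
        · have h2 := Finset.disjoint_left.1 hd h1
          simp [h1, h2]; ring
        · by_cases h2 : j ∈ V
          · simp [h1, h2]; ring
          · simp [h1, h2]
      simp_rw [this, Finset.sum_add_distrib, Finset.mul_sum]
      simp
    have e2 : ∀ i, Φ.mulVec (fun j => (if j ∈ U then s * h j else 0) +
        (if j ∈ V then t * h j else 0)) i
        = s * ∑ j ∈ U, Φ i j * h j + t * ∑ j ∈ V, Φ i j * h j := by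
      intro i
      simp only [Matrix.mulVec, dotProduct, mul_add, Finset.sum_add_distrib, Finset.mul_sum,
        mul_ite, mul_zero, Finset.sum_ite_mem, Finset.univ_inter]
      congr 1 <;> exact Finset.sum_congr rfl fun j _ => by ring
    simp_rw [e2] at key
    rw [e1] at key
    exact key
  · have : (Finset.univ.filter (fun j => (if j ∈ U then s * h j else 0) +
        (if j ∈ V then t * h j else 0) ≠ 0)) ⊆ U ∪ V := by
      intro j hj
      by_contra hc
      simp only [Finset.mem_union, not_or] at hc
      simp [hc.1, hc.2] at hj
    have := (Finset.card_le_card this).trans (Finset.card_union_le U V)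
    omega

lemma aux_ip {n N : ℕ} (k : ℕ) (Φ : Matrix (Fin n) (Fin N) ℝ)
    (δ : ℝ) (hδ : 0 < δ)
    (hRIP : ∀ w : Fin N → ℝ, (Finset.univ.filter (fun j => w j ≠ 0)).card ≤ 2 * k →
      (1 - δ) * ∑ j, (w j) ^ 2 ≤ ∑ i, (Φ.mulVec w i) ^ 2 ∧
      ∑ i, (Φ.mulVec w i) ^ 2 ≤ (1 + δ) * ∑ j, (w j) ^ 2)
    (h : Fin N → ℝ) (U V : Finset (Fin N)) (hd : Disjoint U V) (hU : U.card ≤ k) (hV : V.card ≤ k) :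
    |∑ i, (∑ j ∈ U, Φ i j * h j) * (∑ j ∈ V, Φ i j * h j)| ≤
      δ * √(∑ j ∈ U, (h j)^2) * √(∑ j ∈ V, (h j)^2) := by
  have zero : ∀ W : Finset (Fin N), √(∑ j ∈ W, (h j)^2) = 0 → ∀ i, ∑ j ∈ W, Φ i j * h j = 0 := by
    intro W hW i
    have h0 : 0 ≤ ∑ j ∈ W, (h j)^2 := Finset.sum_nonneg fun _ _ => sq_nonneg _
    rw [Real.sqrt_eq_zero h0, Finset.sum_eq_zero_iff_of_nonneg (fun _ _ => sq_nonneg _)] at hW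
    refine Finset.sum_eq_zero fun j hj => ?_
    have := hW j hj
    rw [pow_eq_zero_iff (by norm_num)] at this
    rw [this, mul_zero]
  have O := aux_orth k Φ δ hRIP h U V hd hU hV
  have ha2 : √(∑ j ∈ U, (h j)^2)^2 = ∑ j ∈ U, (h j)^2 :=
    Real.sq_sqrt (Finset.sum_nonneg fun _ _ => sq_nonneg _)
  have hb2 : √(∑ j ∈ V, (h j)^2)^2 = ∑ j ∈ V, (h j)^2 :=
    Real.sq_sqrt (Finset.sum_nonneg fun _ _ => sq_nonneg _)
  have zU := zero U
  have zV := zero V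
  have ha := Real.sqrt_nonneg (∑ j ∈ U, (h j)^2)
  have hb := Real.sqrt_nonneg (∑ j ∈ V, (h j)^2)
  rw [← ha2, ← hb2] at O
  generalize √(∑ j ∈ U, (h j)^2) = a at *
  generalize √(∑ j ∈ V, (h j)^2) = b at *
  rcases ha.eq_or_lt with ha | ha
  · simp [zU ha.symm, ← ha]
  rcases hb.eq_or_lt with hb | hb
  · simp [zV hb.symm, ← hb]
  have o1 := O b a
  have o2 := O b (-a)
  have ex : ∀ s t : ℝ, ∑ i, (s * ∑ j ∈ U, Φ i j * h j + t * ∑ j ∈ V, Φ i j * h j)^2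
      = s^2 * ∑ i, (∑ j ∈ U, Φ i j * h j)^2 + t^2 * ∑ i, (∑ j ∈ V, Φ i j * h j)^2
        + 2 * s * t * ∑ i, (∑ j ∈ U, Φ i j * h j) * (∑ j ∈ V, Φ i j * h j) := by
    intro s t
    simp only [Finset.mul_sum (s := (Finset.univ : Finset (Fin n))), ← Finset.sum_add_distrib]
    exact Finset.sum_congr rfl fun i _ => by ring
  rw [ex] at o1 o2
  generalize ∑ i, (∑ j ∈ U, Φ i j * h j) * (∑ j ∈ V, Φ i j * h j) = p at *
  have hab : 0 < a * b := mul_pos ha hb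
  rw [abs_le]
  constructor
  · refine le_of_mul_le_mul_left ?_ hab
    linarith [o1.1, o2.2]
  · refine le_of_mul_le_mul_left ?_ hab
    linarith [o1.2, o2.1]

theorem stmt14 {n N : ℕ} (k : ℕ) (hk : 1 ≤ k) (Φ : Matrix (Fin n) (Fin N) ℝ)
    (δ : ℝ) (hδ0 : 0 < δ) (hδ1 : δ < Real.sqrt 2 - 1)
    (hRIP : ∀ w : Fin N → ℝ, (Finset.univ.filter (fun j => w j ≠ 0)).card ≤ 2 * k →
      (1 - δ) * ∑ j, (w j) ^ 2 ≤ ∑ i, (Φ.mulVec w i) ^ 2 ∧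
      ∑ i, (Φ.mulVec w i) ^ 2 ≤ (1 + δ) * ∑ j, (w j) ^ 2)
    (x : Fin N → ℝ) (hx : (Finset.univ.filter (fun j => x j ≠ 0)).card ≤ k)
    (xstar : Fin N → ℝ)
    (hfeas : Φ.mulVec xstar = Φ.mulVec x)
    (hmin : ∀ z : Fin N → ℝ, Φ.mulVec z = Φ.mulVec x → ∑ j, |xstar j| ≤ ∑ j, |z j|) :
    xstar = x := by
  obtain ⟨h, hh⟩ : ∃ h : Fin N → ℝ, h = xstar - x := ⟨_, rfl⟩
  have hΦ : ∀ i, ∑ j, Φ i j * h j = 0 := by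
    intro i
    have : Φ.mulVec h = 0 := by rw [hh, Matrix.mulVec_sub, hfeas, sub_self]
    exact congrFun this i
  obtain ⟨U, hUdef⟩ : ∃ U, U = Finset.univ.filter (fun j => x j ≠ 0) := ⟨_, rfl⟩
  rw [← hUdef] at hx
  have cone : ∑ j ∈ Uᶜ, |h j| ≤ ∑ j ∈ U, |h j| := by
    have h1 := hmin x rfl
    rw [← Finset.sum_add_sum_compl U, ← Finset.sum_add_sum_compl U (fun j => |x j|)] at h1
    have h2 : ∑ j ∈ Uᶜ, |x j| = 0 := Finset.sum_eq_zero fun j hj => by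
      simp [hUdef] at hj; simp [hj]
    have h3 : ∑ j ∈ Uᶜ, |h j| = ∑ j ∈ Uᶜ, |xstar j| := Finset.sum_congr rfl fun j hj => by
      simp [hUdef] at hj; simp [hh, hj]
    have h4 : ∑ j ∈ U, |x j| ≤ ∑ j ∈ U, |xstar j| + ∑ j ∈ U, |h j| := by
      rw [← Finset.sum_add_distrib]
      refine Finset.sum_le_sum fun j _ => ?_
      have : x j = xstar j - h j := by simp [hh]
      rw [this]
      exact abs_sub _ _
    linarith
  obtain ⟨V, hVU, hVc, -, M, hM, hb, hs⟩ := aux_block h Uᶜ k hk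
  have hdUV : Disjoint U V := by
    rw [Finset.disjoint_left]; intro j h1 h2
    exact (Finset.mem_compl.1 (hVU h2)) h1
  have hIP := aux_ip k Φ δ hδ0 hRIP h
  have O := (aux_orth k Φ δ hRIP h U V hdUV hx hVc 1 1).1
  simp only [one_pow, one_mul] at O
  have nn : ∀ W : Finset (Fin N), 0 ≤ ∑ j ∈ W, (h j)^2 :=
    fun W => Finset.sum_nonneg fun _ _ => sq_nonneg _
  have ha2 := Real.sq_sqrt (nn U)
  have hb2 := Real.sq_sqrt (nn V)
  have ha := Real.sqrt_nonneg (∑ j ∈ U, (h j)^2)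
  have hb0 := Real.sqrt_nonneg (∑ j ∈ V, (h j)^2)
  have hkpos : (0:ℝ) < √k := Real.sqrt_pos.2 (by exact_mod_cast hk)
  have l1 : ∑ j ∈ U, |h j| ≤ √k * √(∑ j ∈ U, (h j)^2) := by
    rw [← Real.sqrt_mul (by positivity)]
    apply Real.le_sqrt_of_sq_le
    refine (sq_sum_le_card_mul_sum_sq).trans ?_
    simp only [sq_abs]
    have : (U.card : ℝ) ≤ k := by exact_mod_cast hx
    exact mul_le_mul_of_nonneg_right this (nn U)
  have main := aux_sum h
    (fun j => ∑ i, (∑ l ∈ U, Φ i l * h l + ∑ l ∈ V, Φ i l * h l) * (Φ i j * h j)) k hk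
    (δ * (√(∑ j ∈ U, (h j)^2) + √(∑ j ∈ V, (h j)^2))) (by positivity) _ (Uᶜ \ V) le_rfl ?_ M hM hb
  · have e : ∑ j ∈ Uᶜ \ V, ∑ i, (∑ l ∈ U, Φ i l * h l + ∑ l ∈ V, Φ i l * h l) * (Φ i j * h j)
        = - ∑ i, (∑ j ∈ U, Φ i j * h j + ∑ j ∈ V, Φ i j * h j)^2 := by
      rw [Finset.sum_comm, ← Finset.sum_neg_distrib]
      refine Finset.sum_congr rfl fun i _ => ?_
      rw [← Finset.mul_sum]
      have e1 := hΦ i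
      rw [← Finset.sum_add_sum_compl U, ← Finset.sum_sdiff hVU] at e1
      have : ∑ j ∈ Uᶜ \ V, Φ i j * h j = -(∑ l ∈ U, Φ i l * h l + ∑ l ∈ V, Φ i l * h l) := by
        linarith
      rw [this]; ring
    rw [e, abs_neg, abs_of_nonneg (Finset.sum_nonneg fun _ _ => sq_nonneg _)] at main
    have e3 := Finset.sum_sdiff (f := fun j => |h j|) hVU
    have l2 : k * M + ∑ j ∈ Uᶜ \ V, |h j| ≤ √k * √(∑ j ∈ U, (h j)^2) := by linarith
    have hUz : √(∑ j ∈ U, (h j)^2) = 0 := by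
      rw [← ha2, ← hb2] at O
      generalize √(∑ j ∈ U, (h j)^2) = a at *
      generalize √(∑ j ∈ V, (h j)^2) = b at *
      have m1 := main.trans (mul_le_mul_of_nonneg_left l2 (by positivity))
      have m2 : (1 - δ) * (a^2+b^2) ≤ δ * (a + b) * a := by
        refine le_of_mul_le_mul_left ?_ hkpos
        calc _ ≤ _ := mul_le_mul_of_nonneg_left O hkpos.le
          _ ≤ _ := m1
          _ = _ := by ring
      by_contra hne
      have hapos : 0 < a := lt_of_le_of_ne ha (Ne.symm hne)
      have s2 : √2 ^ 2 = (2:ℝ) := Real.sq_sqrt (by norm_num)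
      have s0 : 0 ≤ √2 := Real.sqrt_nonneg 2
      -- (a+b) a ≤ √2 (a²+b²)
      have m3 : (a + b) * a ≤ √2 * (a^2+b^2) := by
        have q1 : a + b ≤ √2 * √(a^2+b^2) := by
          rw [← Real.sqrt_mul (by norm_num)]
          apply Real.le_sqrt_of_sq_le
          nlinarith [sq_nonneg (a-b)]
        have q2 : a ≤ √(a^2+b^2) := Real.le_sqrt_of_sq_le (by nlinarith)
        have q3 : √(a^2+b^2)^2 = a^2+b^2 := Real.sq_sqrt (by positivity)
        calc (a+b)*a ≤ (√2 * √(a^2+b^2)) * √(a^2+b^2) := by gcongr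
          _ = √2 * √(a^2+b^2)^2 := by ring
          _ = _ := by rw [q3]
      have m4 : (1 - δ) * (a^2+b^2) ≤ (δ * √2) * (a^2+b^2) := by
        nlinarith [mul_le_mul_of_nonneg_left m3 hδ0.le]
      have m5 := le_of_mul_le_mul_right m4 (by positivity)
      nlinarith
    rw [hUz, mul_zero] at l1
    have tot : ∑ j, |h j| ≤ 0 := by
      rw [← Finset.sum_add_sum_compl U]; linarith
    have tot0 := le_antisymm tot (Finset.sum_nonneg fun _ _ => abs_nonneg _)
    rw [Finset.sum_eq_zero_iff_of_nonneg (fun _ _ => abs_nonneg _)] at tot0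
    funext j
    have := tot0 j (Finset.mem_univ j)
    rw [abs_eq_zero, hh, Pi.sub_apply] at this
    linarith
  · intro T hT hTc
    have d1 : Disjoint U T := by
      rw [Finset.disjoint_left]; intro j h1 h2
      exact (Finset.mem_compl.1 (Finset.mem_sdiff.1 (hT h2)).1) h1
    have d2 : Disjoint V T := by
      rw [Finset.disjoint_left]; intro j h1 h2
      exact (Finset.mem_sdiff.1 (hT h2)).2 h1
    have i1 := hIP U T d1 hx hTc
    have i2 := hIP V T d2 hVc hTc
    have e : ∑ j ∈ T, ∑ i, (∑ l ∈ U, Φ i l * h l + ∑ l ∈ V, Φ i l * h l) * (Φ i j * h j)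
        = ∑ i, (∑ j ∈ U, Φ i j * h j) * (∑ j ∈ T, Φ i j * h j)
          + ∑ i, (∑ j ∈ V, Φ i j * h j) * (∑ j ∈ T, Φ i j * h j) := by
      rw [Finset.sum_comm, ← Finset.sum_add_distrib]
      refine Finset.sum_congr rfl fun i _ => ?_
      rw [← Finset.mul_sum]; ring
    rw [e]
    refine (abs_add_le _ _).trans ?_
    linarith
end
end
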